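/- arXiv:1910.08572 — 2 statements merged into one kernel-verified Lean document; each statement's English description precedes it below -/
import Mathlib

section
/- Equidistribution of Gauss sum angles (Deligne, Theorem 1.1): For every continuous function f : S¹ → ℂ on the unit circle and every ε > 0, there exists Q such that for every finite field F_q with q ≥ Q elements (q > 2) and every nontrivial additive character ψ : (F_q,+) → ℂˣ, one has |(1/(q−2)) Σ_{χ nontrivial} f(g(ψ,χ)/√q) − (1/(2π)) ∫₀^{2π} f(e^{iθ}) dθ| < ε, where the sum runs over all nontrivial multiplicative characters χ : F_q^× → ℂˣ and g(ψ,χ)/√q lies on the unit circle. -/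
open Finset
open scoped Classical

instance {F : Type*} [Field F] [Fintype F] : Finite (Fˣ →* ℂˣ) :=
  Finite.of_equiv _ MulChar.equivToUnitHom

noncomputable instance {F : Type*} [Field F] [Fintype F] : Fintype (Fˣ →* ℂˣ) :=
  Fintype.ofFinite _

/-- The Gauss sum `g(ψ, χ) = ∑_{x ∈ F_q^×} ψ(x) χ(x)`. -/
noncomputable def gaussSum' {F : Type*} [Field F] [Fintype F]
    (ψ : AddChar F ℂ) (χ : Fˣ →* ℂˣ) : ℂ :=
  ∑ x : Fˣ, ψ (x : F) * (χ x : ℂ)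

/-!
By Weyl's criterion it suffices that the moments of the normalized angles tend to `0`. Orthogonality
of multiplicative characters turns the `n`-th moment into the hyper-Kloosterman sum `Kl_n(1)`, up to
a negligible trivial-character term, so one needs `Kl_n(1) = o(q ^ (n / 2))`. Deligne's bound gives
more than that; the following elementary argument suffices.

Let `T` be convolution by `ψ ∘ tr` on `GL_{n+1}(F_q)` and `K = T ^ n δ_1`, a class function whose
sum over the unitriangular group `U` is `|U| ^ n * Kl_n(1) ^ (n + 1)`. Cauchy–Schwarz over the
conjugates of `U`, all of determinant `1`, bounds this by the `L²` mass of `K` on `{det = 1}` and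
the number of double cosets of `U`, which Gaussian elimination controls. Since Parseval bounds the
norm of `T`, it remains to gain a factor `O(1 / q)` from the condition `det = 1`.

The gain is visible when `δ_1` is replaced by a generic character of `U`: the twists
`g ↦ diag(s, …, s) g diag(s, 1, …, 1)⁻¹` change the resulting Whittaker function only by a factor of
modulus `1` and multiply the determinant by `s ^ n`, so its mass is shared among many determinants.
One passes from this generic character back to `δ_1` one column of `U` at a time: the restriction to
the next smaller subgroup is an average of twisted characters, and all but a proportion `1 / q` of
these are conjugate to the character one started with.
-/

section WeylCriterion

open Filter Topology AddCircle BigOperators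

lemma norm_expect_le_of_forall_norm_le {ι : Type*} {s : Finset ι} {f : ι → ℂ} {C : ℝ} (hC : 0 ≤ C)
    (h : ∀ i ∈ s, ‖f i‖ ≤ C) : ‖𝔼 i ∈ s, f i‖ ≤ C := by
  rcases s.eq_empty_or_nonempty with rfl | hs
  · simpa using hC
  · exact (RCLike.norm_expect_le (K := ℂ)).trans (expect_le hs h)

lemma continuous_comp_toCircle {T : ℝ} {f : ℂ → ℂ} (hf : ContinuousOn f (Metric.sphere 0 1)) :
    Continuous fun t : AddCircle T ↦ f t.toCircle :=
  hf.comp_continuous (continuous_subtype_val.comp continuous_toCircle) fun t ↦ by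
    rw [mem_sphere_zero_iff_norm, Circle.norm_coe]

variable {T : ℝ} [Fact (0 < T)] {Ω : Type*} {l : Filter Ω} {ι : Ω → Type*}
  {s : ∀ ω, Finset (ι ω)}

lemma integral_fourier (n : ℤ) :
    ∫ t, fourier n t ∂(haarAddCircle (T := T)) = if n = 0 then 1 else 0 := by
  have := congrFun (fourierCoeff_fourier (T := T) n) 0
  simpa [fourierCoeff, Pi.single_apply, eq_comm] using this

lemma integrable_haarAddCircle (p : C(AddCircle T, ℂ)) : MeasureTheory.Integrable p haarAddCircle :=
  p.continuous.integrable_of_hasCompactSupport (HasCompactSupport.of_compactSpace _)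

lemma lipschitzWith_integral_haarAddCircle :
    LipschitzWith 1 fun p : C(AddCircle T, ℂ) ↦ ∫ t, p t ∂haarAddCircle := by
  refine LipschitzWith.of_dist_le_mul fun p r ↦ ?_
  rw [dist_eq_norm, ← MeasureTheory.integral_sub (integrable_haarAddCircle p)
    (integrable_haarAddCircle r)]
  refine (MeasureTheory.norm_integral_le_of_norm_le_const
    (.of_forall fun t ↦ ContinuousMap.norm_coe_le_norm (p - r) t)).trans_eq ?_
  simp [dist_eq_norm]

lemma lipschitzWith_expect {κ : Type*} (s : Finset κ) (x : κ → AddCircle T) :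
    LipschitzWith 1 fun p : C(AddCircle T, ℂ) ↦ 𝔼 i ∈ s, p (x i) := by
  refine LipschitzWith.of_dist_le_mul fun p r ↦ ?_
  rw [dist_eq_norm, ← expect_sub_distrib, NNReal.coe_one, one_mul, dist_eq_norm]
  exact norm_expect_le_of_forall_norm_le (norm_nonneg _)
    fun i _ ↦ ContinuousMap.norm_coe_le_norm (p - r) (x i)

lemma tendsto_expect_fourier {x : ∀ ω, ι ω → AddCircle T} (hs : ∀ᶠ ω in l, (s ω).Nonempty)
    (h : ∀ n : ℕ, n ≠ 0 → Tendsto (fun ω ↦ 𝔼 i ∈ s ω, fourier n (x ω i)) l (𝓝 0)) (n : ℤ) :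
    Tendsto (fun ω ↦ 𝔼 i ∈ s ω, fourier n (x ω i)) l
      (𝓝 (∫ t, fourier n t ∂(haarAddCircle (T := T)))) := by
  rw [integral_fourier]
  rcases eq_or_ne n 0 with rfl | hn
  · refine tendsto_const_nhds.congr' (hs.mono fun ω hω ↦ ?_)
    simp [expect_const hω]
  rw [if_neg hn]
  obtain ⟨k, rfl | rfl⟩ := n.eq_nat_or_neg
  · exact h k (by simpa using hn)
  · have hconj := (Complex.continuous_conj.tendsto 0).comp (h k (by simpa using hn))
    rw [map_zero] at hconj
    refine hconj.congr fun ω ↦ ?_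
    simp only [Function.comp_apply, fourier_neg, ← map_expect (starRingEnd ℂ)]

theorem tendsto_expect_of_tendsto_expect_fourier {x : ∀ ω, ι ω → AddCircle T}
    (hs : ∀ᶠ ω in l, (s ω).Nonempty)
    (h : ∀ n : ℕ, n ≠ 0 → Tendsto (fun ω ↦ 𝔼 i ∈ s ω, fourier n (x ω i)) l (𝓝 0))
    (p : C(AddCircle T, ℂ)) :
    Tendsto (fun ω ↦ 𝔼 i ∈ s ω, p (x ω i)) l (𝓝 (∫ t, p t ∂haarAddCircle)) := by
  have hclosed : IsClosed {p : C(AddCircle T, ℂ) |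
      Tendsto (fun ω ↦ 𝔼 i ∈ s ω, p (x ω i)) l (𝓝 (∫ t, p t ∂haarAddCircle))} :=
    (LipschitzWith.uniformEquicontinuous _ 1 fun ω ↦
      lipschitzWith_expect (s ω) (x ω)).equicontinuous.isClosed_setOfPred_tendsto
        lipschitzWith_integral_haarAddCircle.continuous
  have hdense :
      p ∈ closure (Submodule.span ℂ (Set.range (@fourier T)) : Set C(AddCircle T, ℂ)) := by
    rw [← Submodule.topologicalClosure_coe, span_fourier_closure_eq_top]
    trivial
  refine closure_minimal (fun r hr ↦ ?_) hclosed hdense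
  induction hr using Submodule.span_induction with
  | mem r hr =>
    obtain ⟨n, rfl⟩ := hr
    exact tendsto_expect_fourier hs h n
  | zero => simpa using tendsto_const_nhds
  | add r₁ r₂ _ _ h₁ h₂ =>
    simpa [expect_add_distrib, MeasureTheory.integral_add (integrable_haarAddCircle r₁)
      (integrable_haarAddCircle r₂)] using h₁.add h₂
  | smul c r _ hr =>
    simpa [mul_expect, MeasureTheory.integral_const_mul] using hr.const_mul c

lemma integral_comp_toCircle (f : ℂ → ℂ) :
    ∫ t : AddCircle T, f t.toCircle ∂haarAddCircle = Real.circleAverage f 0 1 := by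
  have hT : T ≠ 0 := (Fact.out : 0 < T).ne'
  rw [integral_haarAddCircle, ← AddCircle.intervalIntegral_preimage T 0, Real.circleAverage_def]
  have := intervalIntegral.integral_comp_mul_left (a := 0) (b := T)
    (fun θ ↦ f (circleMap 0 1 θ)) (div_ne_zero Real.two_pi_pos.ne' hT)
  rw [mul_zero, div_mul_cancel₀ _ hT] at this
  simp only [toCircle_apply_mk, Circle.coe_exp, zero_add]
  simp only [circleMap, zero_add, Complex.ofReal_one, one_mul] at this ⊢
  rw [this, smul_smul]
  congr 1
  field_simp

theorem tendsto_expect_circleAverage {z : ∀ ω, ι ω → ℂ} (hs : ∀ᶠ ω in l, (s ω).Nonempty)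
    (hz : ∀ ω, ∀ i ∈ s ω, ‖z ω i‖ = 1)
    (h : ∀ n : ℕ, n ≠ 0 → Tendsto (fun ω ↦ 𝔼 i ∈ s ω, z ω i ^ n) l (𝓝 0))
    {f : ℂ → ℂ} (hf : ContinuousOn f (Metric.sphere 0 1)) :
    Tendsto (fun ω ↦ 𝔼 i ∈ s ω, f (z ω i)) l (𝓝 (Real.circleAverage f 0 1)) := by
  have : Fact (0 < 2 * Real.pi) := ⟨Real.two_pi_pos⟩
  let x (ω : Ω) (i : ι ω) : AddCircle (2 * Real.pi) := ((z ω i).arg : ℝ)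
  have hx (ω : Ω) (i : ι ω) (hi : i ∈ s ω) : ((x ω i).toCircle : ℂ) = z ω i := by
    have := Complex.norm_mul_exp_arg_mul_I (z ω i)
    rw [hz ω i hi, Complex.ofReal_one, one_mul] at this
    rw [toCircle_apply_mk, div_self Real.two_pi_pos.ne', one_mul, Circle.coe_exp, this]
  have key := tendsto_expect_of_tendsto_expect_fourier (x := x) hs
    (fun n hn ↦ (h n hn).congr fun ω ↦ expect_congr rfl fun i hi ↦ ?_)
    ⟨fun t ↦ f t.toCircle, continuous_comp_toCircle hf⟩
  · simp only [ContinuousMap.coe_mk, integral_comp_toCircle] at key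
    exact key.congr fun ω ↦ expect_congr rfl fun i hi ↦ by rw [hx ω i hi]
  · rw [fourier_apply, natCast_zsmul, toCircle_nsmul, Circle.coe_pow, hx ω i hi]

end WeylCriterion

section AdditiveCharacters

variable {F : Type*} [Field F]

lemma exists_addChar_mul_ne_one {ψ : AddChar F ℂ} (hψ : ψ ≠ 1) {x : F} (hx : x ≠ 0) :
    ∃ c, ψ (c * x) ≠ 1 := by
  obtain ⟨z, hz⟩ := AddChar.ne_one_iff.mp hψ
  exact ⟨z / x, by rwa [div_mul_cancel₀ z hx]⟩

variable {V : Type*} [AddCommGroup V] [Module F V] [Fintype V]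

lemma sum_addChar_linearMap {ψ : AddChar F ℂ} (hψ : ψ ≠ 1) (L : V →ₗ[F] F) :
    ∑ v, ψ (L v) = if L = 0 then (Fintype.card V : ℂ) else 0 := by
  have hL : ψ.compAddMonoidHom L.toAddMonoidHom = 0 ↔ L = 0 := by
    refine ⟨fun h ↦ ?_, fun h ↦ by ext; simp [h]⟩
    by_contra hne
    obtain ⟨v, hv⟩ := DFunLike.ne_iff.mp hne
    obtain ⟨c, hc⟩ := exists_addChar_mul_ne_one hψ hv
    exact hc (by simpa using DFunLike.congr_fun h (c • v))
  simpa [hL] using AddChar.sum_eq_ite (ψ.compAddMonoidHom L.toAddMonoidHom)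

theorem sum_norm_sq_sum_addChar [Finite F] {Y : Type*} [Fintype Y] {ψ : AddChar F ℂ} (hψ : ψ ≠ 1)
    {L : Y → V →ₗ[F] F} (hL : Function.Injective L) (c : Y → ℂ) :
    ∑ v, ‖∑ y, ψ (L y v) * c y‖ ^ 2 = Fintype.card V * ∑ y, ‖c y‖ ^ 2 := by
  have orthogonality (y y' : Y) :
      ∑ v, ψ (L y v) * starRingEnd ℂ (ψ (L y' v)) = if y = y' then (Fintype.card V : ℂ) else 0 := by
    simpa [← AddChar.map_neg_eq_conj, ← AddChar.map_add_eq_mul, ← sub_eq_add_neg, sub_eq_zero,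
      hL.eq_iff] using sum_addChar_linearMap hψ (L y - L y')
  have expand (v : V) : ((‖∑ y, ψ (L y v) * c y‖ : ℝ) : ℂ) ^ 2 =
      ∑ y, ∑ y', (ψ (L y v) * starRingEnd ℂ (ψ (L y' v))) * (c y * starRingEnd ℂ (c y')) := by
    rw [← Complex.mul_conj', map_sum, sum_mul_sum]
    refine sum_congr rfl fun y _ ↦ sum_congr rfl fun y' _ ↦ ?_
    rw [map_mul]
    ring
  apply Complex.ofReal_injective
  push_cast
  simp_rw [expand]
  rw [sum_comm, mul_sum]
  refine sum_congr rfl fun y _ ↦ ?_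
  rw [sum_comm]
  simp [← sum_mul, orthogonality, Complex.mul_conj']

end AdditiveCharacters

section Convolution

variable {G R : Type*} [Group G] [Fintype G] [CommRing R]

/-- Left convolution by `φ`, as a linear endomorphism of the functions on a finite group. -/
def convEnd (φ : G → R) : Module.End R (G → R) where
  toFun f g := ∑ y, φ (g * y⁻¹) * f y
  map_add' f₁ f₂ := by
    ext g
    simp [mul_add, sum_add_distrib]
  map_smul' c f := by
    ext g
    simp [mul_sum, mul_left_comm]

lemma convEnd_apply (φ : G → R) (f : G → R) (g : G) :
    convEnd φ f g = ∑ y, φ (g * y⁻¹) * f y := rfl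

lemma convEnd_commute_funLeft_mul_right (φ : G → R) (h : G) :
    Commute (convEnd φ) (LinearMap.funLeft R R (· * h)) := by
  refine LinearMap.ext fun f ↦ funext fun g ↦ ?_
  simp only [Module.End.mul_apply, convEnd_apply, LinearMap.funLeft_apply]
  refine Fintype.sum_equiv (Equiv.mulRight h) _ _ fun y ↦ ?_
  simp [mul_assoc]

lemma convEnd_commute_funLeft_mul_left {φ : G → R} (hφ : ∀ g h, φ (h * g * h⁻¹) = φ g) (h : G) :
    Commute (convEnd φ) (LinearMap.funLeft R R (h * ·)) := by
  refine LinearMap.ext fun f ↦ funext fun g ↦ ?_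
  simp only [Module.End.mul_apply, convEnd_apply, LinearMap.funLeft_apply]
  refine Fintype.sum_equiv (Equiv.mulLeft h) _ _ fun y ↦ ?_
  rw [← hφ (g * y⁻¹) h]
  simp [mul_assoc]

lemma convEnd_pow_comp_mul_right (φ : G → R) (n : ℕ) (f : G → R) (h : G) :
    (convEnd φ ^ n) (fun g ↦ f (g * h)) = fun g ↦ (convEnd φ ^ n) f (g * h) :=
  LinearMap.congr_fun ((convEnd_commute_funLeft_mul_right φ h).pow_left n) f

lemma convEnd_pow_comp_mul_left {φ : G → R} (hφ : ∀ g h, φ (h * g * h⁻¹) = φ g) (n : ℕ)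
    (f : G → R) (h : G) :
    (convEnd φ ^ n) (fun g ↦ f (h * g)) = fun g ↦ (convEnd φ ^ n) f (h * g) :=
  LinearMap.congr_fun ((convEnd_commute_funLeft_mul_left hφ h).pow_left n) f

lemma convEnd_pow_comp_conj {φ : G → R} (hφ : ∀ g h, φ (h * g * h⁻¹) = φ g) (n : ℕ)
    (f : G → R) (h : G) :
    (convEnd φ ^ n) (fun g ↦ f (h * g * h⁻¹)) = fun g ↦ (convEnd φ ^ n) f (h * g * h⁻¹) := by
  rw [convEnd_pow_comp_mul_left hφ n (fun g ↦ f (g * h⁻¹)), convEnd_pow_comp_mul_right]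

end Convolution

section ConjugateCounting

variable {G : Type*} [Group G] [Fintype G] (H : Subgroup G)

/-- The number of `x` with `x⁻¹ g x ∈ H`, i.e. of fixed points of `g` on `G ⧸ H` times `|H|`. -/
noncomputable def conjCount (g : G) : ℕ := #{x | x⁻¹ * g * x ∈ H}

lemma conjCount_conj (g h : G) : conjCount H (h * g * h⁻¹) = conjCount H g := by
  refine card_equiv (Equiv.mulLeft h⁻¹) fun x ↦ ?_
  simp [mul_assoc]

lemma sum_mul_conjCount {R : Type*} [CommSemiring R] {f : G → R}
    (hf : ∀ g h, f (h * g * h⁻¹) = f g) :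
    ∑ g, f g * conjCount H g = Fintype.card G * ∑ h : H, f h := by
  have sum_conj (x : G) : ∑ g, (if x⁻¹ * g * x ∈ H then f g else 0) = ∑ h : H, f h := by
    rw [← (MulAut.conj x).toEquiv.sum_comp, ← sum_subtype {h | h ∈ H} (by simp), sum_filter]
    simp [hf, ← mul_assoc]
  simp only [conjCount, card_filter, Nat.cast_sum, mul_sum, Nat.cast_ite, Nat.cast_one,
    Nat.cast_zero, mul_ite, mul_one, mul_zero]
  rw [sum_comm]
  simp [sum_conj, mul_sum]

theorem card_mul_norm_sq_sum_le {K : G → ℂ} (hK : ∀ g h, K (h * g * h⁻¹) = K g) {D : Finset G}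
    (hD : ∀ g x, x⁻¹ * g * x ∈ H → g ∈ D) :
    Fintype.card G * ‖∑ h : H, K h‖ ^ 2 ≤ (∑ g ∈ D, ‖K g‖ ^ 2) * ∑ h : H, (conjCount H h : ℝ) := by
  have hzero (g : G) (hg : g ∉ D) : conjCount H g = 0 :=
    card_eq_zero.mpr (filter_eq_empty_iff.mpr fun x _ hx ↦ hg (hD g x hx))
  have hsum : Fintype.card G * ‖∑ h : H, K h‖ ≤ ∑ g ∈ D, ‖K g‖ * conjCount H g := by
    rw [← Complex.norm_natCast, ← norm_mul, ← sum_mul_conjCount H hK,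
      ← sum_subset (subset_univ D) fun g _ hg ↦ by simp [hzero g hg]]
    exact (norm_sum_le _ _).trans_eq (by simp)
  have hsq : ∑ g, (conjCount H g : ℝ) ^ 2 = Fintype.card G * ∑ h : H, (conjCount H h : ℝ) := by
    rw [← sum_mul_conjCount H (f := fun g ↦ (conjCount H g : ℝ)) fun g h ↦ by rw [conjCount_conj]]
    simp [sq]
  have hG : (0 : ℝ) < Fintype.card G := by exact_mod_cast Fintype.card_pos
  refine le_of_mul_le_mul_left ?_ hG
  calc (Fintype.card G : ℝ) * (Fintype.card G * ‖∑ h : H, K h‖ ^ 2)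
      = (Fintype.card G * ‖∑ h : H, K h‖) ^ 2 := by ring
    _ ≤ (∑ g ∈ D, ‖K g‖ * conjCount H g) ^ 2 := by gcongr
    _ ≤ (∑ g ∈ D, ‖K g‖ ^ 2) * ∑ g ∈ D, (conjCount H g : ℝ) ^ 2 := sum_mul_sq_le_sq_mul_sq ..
    _ ≤ (∑ g ∈ D, ‖K g‖ ^ 2) * ∑ g, (conjCount H g : ℝ) ^ 2 := by gcongr; exact subset_univ D
    _ = _ := by rw [hsq]; ring

theorem sum_conjCount_le {W : Finset G} (hW : ∀ g, ∃ a ∈ H, ∃ b ∈ H, a * g * b ∈ W) :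
    ∑ h : H, conjCount H h ≤ #W * Fintype.card H ^ 2 := by
  choose a ha b hb hab using hW
  let toTriple (p : Σ _ : H, G) : G × G × G :=
    (a p.2 * p.2 * b p.2, p.1 * (a p.2)⁻¹, (b p.2)⁻¹ * (p.2⁻¹ * p.1 * p.2)⁻¹)
  have recover (p : Σ _ : H, G) :
      p.2 = (toTriple p).2.1 * (toTriple p).1 * (toTriple p).2.2 := by
    simp only [toTriple]
    group
  have hinj : Function.Injective toTriple := fun p p' hpp' ↦ by
    obtain ⟨h, x⟩ := p
    obtain ⟨h', x'⟩ := p'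
    obtain rfl : x = x' := by
      simpa only [hpp', ← recover] using recover ⟨h, x⟩
    simpa [toTriple] using congrArg (·.2.1) hpp'
  have hcard : #{h | h ∈ H} = Fintype.card H := (Fintype.card_subtype _).symm
  simp only [conjCount]
  rw [← card_sigma, sq, ← hcard, ← card_product, ← card_product]
  refine card_le_card_of_injOn toTriple (fun p hp ↦ ?_) hinj.injOn
  have hp' : p.2⁻¹ * p.1 * p.2 ∈ H := (mem_filter.mp (mem_sigma.mp hp).2).2
  simpa [toTriple, hab, H.mul_mem_cancel_left, ha] using
    H.mul_mem (H.inv_mem (hb p.2)) (H.inv_mem hp')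

end ConjugateCounting

section Unitriangular

open Matrix

variable {m : ℕ} {R : Type*} [CommRing R]

/-- The strictly upper triangular matrices whose first `k` columns vanish. -/
def strictUpper (m : ℕ) (R : Type*) [CommRing R] (k : ℕ) :
    Submodule R (Matrix (Fin m) (Fin m) R) where
  carrier := {N | ∀ i j : Fin m, (j.val < k ∨ j ≤ i) → N i j = 0}
  add_mem' hM hN i j hij := by simp [hM i j hij, hN i j hij]
  zero_mem' _ _ _ := rfl
  smul_mem' c N hN i j hij := by simp [hN i j hij]

lemma mem_strictUpper {k : ℕ} {N : Matrix (Fin m) (Fin m) R} :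
    N ∈ strictUpper m R k ↔ ∀ i j : Fin m, (j.val < k ∨ j ≤ i) → N i j = 0 := Iff.rfl

lemma isUpperTriangular_of_sub_one_mem_strictUpper {k : ℕ} {A : Matrix (Fin m) (Fin m) R}
    (hA : A - 1 ∈ strictUpper m R k) : A.IsUpperTriangular := fun i j (hij : j < i) ↦ by
  simpa [one_apply_ne hij.ne'] using hA i j (.inr hij.le)

lemma apply_self_of_sub_one_mem_strictUpper {k : ℕ} {A : Matrix (Fin m) (Fin m) R}
    (hA : A - 1 ∈ strictUpper m R k) (i : Fin m) : A i i = 1 := by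
  simpa [sub_eq_zero] using hA i i (.inr le_rfl)

lemma mul_mem_strictUpper {k : ℕ} {A N : Matrix (Fin m) (Fin m) R}
    (hA : A.IsUpperTriangular) (hN : N ∈ strictUpper m R k) : A * N ∈ strictUpper m R k := by
  intro i j hij
  rw [mul_apply]
  refine sum_eq_zero fun l _ ↦ ?_
  rcases lt_or_ge l i with hl | hl
  · rw [hA hl, zero_mul]
  · rw [hN l j (hij.imp_right (·.trans hl)), mul_zero]

/-- The upper unitriangular matrices whose first `k` columns are those of the identity. -/
def unitriangular (m : ℕ) (R : Type*) [CommRing R] (k : ℕ) : Subgroup (GL (Fin m) R) where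
  carrier := {g | (g : Matrix (Fin m) (Fin m) R) - 1 ∈ strictUpper m R k}
  one_mem' := by simp
  mul_mem' {g h} hg hh := by
    have : ((g * h : GL (Fin m) R) : Matrix (Fin m) (Fin m) R) - 1 = g * (h - 1) + (g - 1) := by
      rw [Units.val_mul]
      noncomm_ring
    rw [Set.mem_ofPred_eq, this]
    exact add_mem (mul_mem_strictUpper
      (isUpperTriangular_of_sub_one_mem_strictUpper hg) hh) hg
  inv_mem' {g} hg := by
    have hinv : ((g⁻¹ : GL (Fin m) R) : Matrix (Fin m) (Fin m) R).IsUpperTriangular := by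
      rw [coe_units_inv]
      exact blockTriangular_inv_of_blockTriangular (isUpperTriangular_of_sub_one_mem_strictUpper hg)
    have : ((g⁻¹ : GL (Fin m) R) : Matrix (Fin m) (Fin m) R) - 1 =
        -(((g⁻¹ : GL (Fin m) R) : Matrix (Fin m) (Fin m) R) * (g - 1)) := by
      rw [mul_sub, Units.inv_mul, mul_one, neg_sub]
    rw [Set.mem_ofPred_eq, this]
    exact neg_mem (mul_mem_strictUpper hinv hg)

lemma mem_unitriangular {k : ℕ} {g : GL (Fin m) R} :
    g ∈ unitriangular m R k ↔ (g : Matrix (Fin m) (Fin m) R) - 1 ∈ strictUpper m R k := Iff.rfl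

lemma unitriangular_anti : Antitone (unitriangular m R) :=
  fun _ _ hkl _ hg i j hij ↦ hg i j (hij.imp_left (lt_of_lt_of_le · hkl))

lemma unitriangular_one : unitriangular m R 1 = unitriangular m R 0 := by
  refine le_antisymm (unitriangular_anti zero_le_one) fun g hg i j hij ↦ hg i j (.inr ?_)
  rcases hij with hj | hij
  · exact Fin.le_def.mpr (by omega)
  · exact hij

lemma unitriangular_self : unitriangular m R m = ⊥ := by
  refine (Subgroup.eq_bot_iff_forall _).mpr fun g hg ↦ Units.ext (Matrix.ext fun i j ↦ ?_)
  simpa [sub_eq_zero] using hg i j (.inl j.2)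

lemma det_of_mem_unitriangular {k : ℕ} {g : GL (Fin m) R} (hg : g ∈ unitriangular m R k) :
    GeneralLinearGroup.det g = 1 := by
  ext
  rw [GeneralLinearGroup.val_det_apply,
    det_of_isUpperTriangular (isUpperTriangular_of_sub_one_mem_strictUpper hg)]
  simp [apply_self_of_sub_one_mem_strictUpper hg]

lemma det_one_add_of_mem_strictUpper {k : ℕ} {N : Matrix (Fin m) (Fin m) R}
    (hN : N ∈ strictUpper m R k) : (1 + N).det = 1 := by
  have hN' : 1 + N - 1 ∈ strictUpper m R k := by simpa
  rw [det_of_isUpperTriangular (isUpperTriangular_of_sub_one_mem_strictUpper hN')]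
  simp [mem_strictUpper.mp hN]

/-- Subtracting the identity matrix identifies `unitriangular m R k` with `strictUpper m R k`. -/
noncomputable def unitriangularEquiv (m : ℕ) (R : Type*) [CommRing R] (k : ℕ) :
    unitriangular m R k ≃ strictUpper m R k where
  toFun g := ⟨(g : GL (Fin m) R) - 1, g.2⟩
  invFun N := ⟨GeneralLinearGroup.mk'' (1 + N.1) (by simp [det_one_add_of_mem_strictUpper N.2]), by
    rw [mem_unitriangular]
    exact (add_sub_cancel_left 1 N.1).symm ▸ N.2⟩
  left_inv g := Subtype.ext (Units.ext (add_sub_cancel 1 (g : GL (Fin m) R).val))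
  right_inv N := Subtype.ext (add_sub_cancel_left 1 N.1)

lemma forall_trace_mul_strictUpper_eq_zero_iff {A : Matrix (Fin m) (Fin m) R} :
    (∀ N ∈ strictUpper m R 0, (A * N).trace = 0) ↔ A.IsUpperTriangular := by
  refine ⟨fun h i j (hij : j < i) ↦ ?_, fun hA N hN ↦ sum_eq_zero fun i _ ↦
    mul_mem_strictUpper hA hN i i (.inr le_rfl)⟩
  have hmem : single j i (1 : R) ∈ strictUpper m R 0 := fun a b hab ↦ by
    refine single_apply_of_ne _ _ _ _ _ ?_
    rintro ⟨rfl, rfl⟩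
    omega
  simpa [trace_mul_comm A, trace_single_mul] using h _ hmem

/-- The matrix `∑ E_{i+1,i}`; pairing with it under the trace sums the superdiagonal entries. -/
def subdiagonal (m : ℕ) (R : Type*) [CommRing R] : Matrix (Fin m) (Fin m) R :=
  of fun i j ↦ if i.val = j.val + 1 then 1 else 0

/-- The sum of the superdiagonal entries. -/
def superdiagSum (g : GL (Fin m) R) : R := (subdiagonal m R * g).trace

lemma trace_subdiagonal : (subdiagonal m R).trace = 0 :=
  sum_eq_zero fun i _ ↦ by simp [subdiagonal]

lemma superdiagSum_one : superdiagSum (1 : GL (Fin m) R) = 0 := by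
  simp [superdiagSum, trace_subdiagonal]

lemma superdiagSum_mul {k : ℕ} {u v : GL (Fin m) R} (hu : u ∈ unitriangular m R k)
    (hv : v ∈ unitriangular m R k) : superdiagSum (u * v) = superdiagSum u + superdiagSum v := by
  have hprod (i j : Fin m) (hij : i.val = j.val + 1) :
      ((u - 1 : Matrix (Fin m) (Fin m) R) * (v - 1)) j i = 0 := by
    rw [mul_apply]
    refine sum_eq_zero fun l _ ↦ ?_
    rcases le_or_gt l j with hl | hl
    · rw [hu j l (.inr hl), zero_mul]
    · rw [hv l i (.inr (Fin.le_def.mpr (by omega))), mul_zero]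
  have hzero : (subdiagonal m R * ((u - 1) * (v - 1))).trace = 0 := by
    refine sum_eq_zero fun i _ ↦ ?_
    rw [diag_apply, mul_apply]
    refine sum_eq_zero fun j _ ↦ ?_
    by_cases hij : i.val = j.val + 1
    · rw [hprod i j hij, mul_zero]
    · simp [subdiagonal, hij]
  have hexpand : (u * v : Matrix (Fin m) (Fin m) R) = (u - 1) * (v - 1) + u + v - 1 := by
    noncomm_ring
  rw [superdiagSum, Units.val_mul, hexpand, mul_sub _ _ 1, mul_add, mul_add, trace_sub, trace_add,
    trace_add, hzero, mul_one, trace_subdiagonal, zero_add, sub_zero, superdiagSum, superdiagSum]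

lemma superdiagSum_inv {k : ℕ} {u : GL (Fin m) R} (hu : u ∈ unitriangular m R k) :
    superdiagSum u⁻¹ = -superdiagSum u := by
  have := superdiagSum_mul hu (inv_mem hu)
  rw [mul_inv_cancel, superdiagSum_one] at this
  exact eq_neg_of_add_eq_zero_right this.symm

/-- The entries of `A` on its `n`-th subdiagonal are `1`, and those below it vanish. -/
def HasUnitSubdiagonal (n : ℕ) (A : Matrix (Fin m) (Fin m) R) : Prop :=
  ∀ r l : Fin m, l.val + n ≤ r.val → A r l = if l.val + n = r.val then 1 else 0

lemma HasUnitSubdiagonal.mul {a b : ℕ} {A B : Matrix (Fin m) (Fin m) R}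
    (hA : HasUnitSubdiagonal a A) (hB : HasUnitSubdiagonal b B) :
    HasUnitSubdiagonal (a + b) (A * B) := by
  intro r l hrl
  have hr : r.val - a < m := by omega
  rw [mul_apply, sum_eq_single ⟨r.val - a, hr⟩]
  · rw [hA _ _ (by grind), hB _ _ (by grind), if_pos (by grind), one_mul]
    congr 1
    grind
  · intro t _ ht
    by_cases htr : t.val + a ≤ r.val
    · rw [hA r t htr, if_neg (by grind), zero_mul]
    · rw [hB t l (by omega), if_neg (by omega), mul_zero]
  · simp

lemma hasUnitSubdiagonal_zero_of_mem_unitriangular {k : ℕ} {g : GL (Fin m) R}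
    (hg : g ∈ unitriangular m R k) : HasUnitSubdiagonal 0 g.val := by
  intro r l hrl
  rcases hrl.eq_or_lt with h | h
  · obtain rfl : l = r := Fin.ext h
    simpa using apply_self_of_sub_one_mem_strictUpper hg l
  · rw [if_neg h.ne]
    exact isUpperTriangular_of_sub_one_mem_strictUpper hg h

lemma isUpperTriangular_sub_subdiagonal_iff {A : Matrix (Fin m) (Fin m) R} :
    (A - subdiagonal m R).IsUpperTriangular ↔ HasUnitSubdiagonal 1 A :=
  forall₂_congr fun i j ↦ imp_congr Nat.lt_iff_add_one_le <| by
    simp [subdiagonal, sub_eq_zero, eq_comm (a := i.val)]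

end Unitriangular

section TraceConvolution

open Matrix

variable {F : Type*} [Field F] {m : ℕ} {ψ : AddChar F ℂ}

lemma addChar_trace_conj (g h : GL (Fin m) F) : ψ (h * g * h⁻¹).val.trace = ψ g.val.trace := by
  rw [Units.val_mul, Units.val_mul, trace_units_conj]

variable [Fintype F]

theorem sum_unitriangular_addChar_trace (hψ : ψ ≠ 1) (A : Matrix (Fin m) (Fin m) F) :
    ∑ v : unitriangular m F 0, ψ (A * (v : GL (Fin m) F).val).trace =
      if A.IsUpperTriangular then Fintype.card (unitriangular m F 0) * ψ A.trace else 0 := by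
  let L : strictUpper m F 0 →ₗ[F] F :=
    traceLinearMap (Fin m) F F ∘ₗ LinearMap.mulLeft F A ∘ₗ (strictUpper m F 0).subtype
  have hL : L = 0 ↔ A.IsUpperTriangular := by
    rw [← forall_trace_mul_strictUpper_eq_zero_iff]
    exact ⟨fun h N hN ↦ LinearMap.congr_fun h ⟨N, hN⟩, fun h ↦ LinearMap.ext fun N ↦ h N N.2⟩
  calc ∑ v : unitriangular m F 0, ψ (A * (v : GL (Fin m) F).val).trace
      = ∑ N : strictUpper m F 0, ψ A.trace * ψ (L N) := by
        refine Fintype.sum_equiv (unitriangularEquiv m F 0) _ _ fun v ↦ ?_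
        simp [L, unitriangularEquiv, mul_sub, ← AddChar.map_add_eq_mul]
    _ = _ := by
        rw [← mul_sum, sum_addChar_linearMap hψ, Fintype.card_congr (unitriangularEquiv m F 0)]
        simp only [hL]
        split_ifs <;> ring

/-- Convolution by `g ↦ ψ (tr g)` on `GL m`, a Fourier transform along `m × m` matrices. -/
noncomputable def traceConv (ψ : AddChar F ℂ) (m : ℕ) : Module.End ℂ (GL (Fin m) F → ℂ) :=
  convEnd fun g ↦ ψ g.val.trace

lemma traceConv_apply (f : GL (Fin m) F → ℂ) (g : GL (Fin m) F) :
    traceConv ψ m f g = ∑ y, ψ (g * y⁻¹).val.trace * f y := rfl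

lemma traceConv_pow_comp_mul_left (n : ℕ) (f : GL (Fin m) F → ℂ) (h : GL (Fin m) F) :
    (traceConv ψ m ^ n) (fun g ↦ f (h * g)) = fun g ↦ (traceConv ψ m ^ n) f (h * g) :=
  convEnd_pow_comp_mul_left addChar_trace_conj n f h

lemma traceConv_pow_apply_mul_left (n : ℕ) {f f' : GL (Fin m) F → ℂ} {a : GL (Fin m) F} {z : ℂ}
    (h : ∀ g, f (a * g) = z * f' g) (g : GL (Fin m) F) :
    (traceConv ψ m ^ n) f (a * g) = z * (traceConv ψ m ^ n) f' g := by
  have hsmul : (fun g ↦ f (a * g)) = z • f' := funext h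
  rw [← congrFun (traceConv_pow_comp_mul_left n f a) g, hsmul, map_smul, Pi.smul_apply, smul_eq_mul]

lemma traceConv_pow_comp_conj (n : ℕ) (f : GL (Fin m) F → ℂ) (h : GL (Fin m) F) :
    (traceConv ψ m ^ n) (fun g ↦ f (h * g * h⁻¹)) =
      fun g ↦ (traceConv ψ m ^ n) f (h * g * h⁻¹) :=
  convEnd_pow_comp_conj addChar_trace_conj n f h

lemma sum_norm_sq_traceConv_le (hψ : ψ ≠ 1) (f : GL (Fin m) F → ℂ) :
    ∑ g, ‖traceConv ψ m f g‖ ^ 2 ≤ (Fintype.card F : ℝ) ^ m ^ 2 * ∑ g, ‖f g‖ ^ 2 := by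
  let L (y : GL (Fin m) F) : Matrix (Fin m) (Fin m) F →ₗ[F] F :=
    traceLinearMap (Fin m) F F ∘ₗ LinearMap.mulRight F (y⁻¹ : GL (Fin m) F).val
  have hL : Function.Injective L := fun y y' h ↦ inv_injective <| Units.ext <|
    ext_iff_trace_mul_left.mpr fun A ↦ LinearMap.congr_fun h A
  have hcard : Fintype.card (Matrix (Fin m) (Fin m) F) = Fintype.card F ^ m ^ 2 := by
    simp [Fintype.card_congr Matrix.of.symm, pow_two, pow_mul]
  calc ∑ g, ‖traceConv ψ m f g‖ ^ 2
      = ∑ A ∈ univ.map ⟨_, Units.val_injective⟩, ‖∑ y, ψ (L y A) * f y‖ ^ 2 := by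
        rw [sum_map]
        rfl
    _ ≤ ∑ A, ‖∑ y, ψ (L y A) * f y‖ ^ 2 :=
        sum_le_sum_of_subset_of_nonneg (subset_univ _) fun _ _ _ ↦ by positivity
    _ = _ := by
        rw [sum_norm_sq_sum_addChar hψ hL, hcard, Nat.cast_pow]

lemma sum_norm_sq_traceConv_pow_le (hψ : ψ ≠ 1) (n : ℕ) (f : GL (Fin m) F → ℂ) :
    ∑ g, ‖(traceConv ψ m ^ n) f g‖ ^ 2 ≤
      ((Fintype.card F : ℝ) ^ m ^ 2) ^ n * ∑ g, ‖f g‖ ^ 2 := by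
  induction n with
  | zero => simp
  | succ n ih =>
    rw [pow_succ' (traceConv ψ m), Module.End.mul_apply]
    refine (sum_norm_sq_traceConv_le hψ _).trans ?_
    rw [pow_succ' _ n, mul_assoc]
    gcongr

/-- Substituting `v⁻¹ * y` for `y` and averaging over unitriangular `v` leaves the sum of an
additive character, which vanishes unless the quotient `g * y⁻¹` has unit subdiagonal. -/
theorem traceConv_apply_of_left_equivariant (hψ : ψ ≠ 1) {f : GL (Fin m) F → ℂ}
    (hf : ∀ u ∈ unitriangular m F 0, ∀ y, f (u * y) = ψ (superdiagSum u) * f y)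
    (g : GL (Fin m) F) :
    traceConv ψ m f g = ∑ y, if HasUnitSubdiagonal 1 (g * y⁻¹).val
      then ψ (g * y⁻¹).val.trace * f y else 0 := by
  have hU : (Fintype.card (unitriangular m F 0) : ℂ) ≠ 0 := by
    exact_mod_cast Fintype.card_ne_zero
  have translate (v : unitriangular m F 0) : traceConv ψ m f g =
      ∑ y, ψ (((g * y⁻¹).val - subdiagonal m F) * (v : GL (Fin m) F).val).trace * f y := by
    rw [traceConv_apply, ← Equiv.sum_comp (Equiv.mulLeft (v : GL (Fin m) F)⁻¹)]
    refine sum_congr rfl fun y _ ↦ ?_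
    rw [Equiv.coe_mulLeft, hf _ (inv_mem v.2), ← mul_assoc, ← AddChar.map_add_eq_mul,
      superdiagSum_inv v.2, _root_.mul_inv_rev, inv_inv, ← mul_assoc, Units.val_mul _ v.1, sub_mul,
      trace_sub, ← sub_eq_add_neg, superdiagSum]
  refine mul_left_cancel₀ hU ?_
  calc Fintype.card (unitriangular m F 0) * traceConv ψ m f g
      = ∑ _v : unitriangular m F 0, traceConv ψ m f g := by simp
    _ = _ := by
        rw [sum_congr rfl fun v _ ↦ translate v, sum_comm, mul_sum]
        refine sum_congr rfl fun y _ ↦ ?_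
        rw [← sum_mul, sum_unitriangular_addChar_trace hψ, trace_sub, trace_subdiagonal, sub_zero]
        simp only [isUpperTriangular_sub_subdiagonal_iff]
        split_ifs <;> ring

end TraceConvolution

section LeadingScalar

open Matrix

variable {m : ℕ} {R : Type*} [CommRing R]

/-- The embedding of the diagonal torus into `GL m`. -/
def diagUnits (m : ℕ) (R : Type*) [CommRing R] : (Fin m → Rˣ) →* GL (Fin m) R :=
  (Units.map (diagonalRingHom (Fin m) R).toMonoidHom).comp MulEquiv.piUnits.symm.toMonoidHom

lemma val_diagUnits (t : Fin m → Rˣ) : (diagUnits m R t).val = diagonal fun i ↦ (t i : R) := rfl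

/-- The diagonal matrix `diag(d, …, d, 1, …, 1)` with `d` in the positions `0, …, n`. -/
def leadingScalar (m n : ℕ) (d : Rˣ) : GL (Fin m) R :=
  diagUnits m R fun i ↦ if i.val ≤ n then d else 1

lemma val_leadingScalar (n : ℕ) (d : Rˣ) :
    (leadingScalar m n d).val = diagonal fun i ↦ if i.val ≤ n then d.val else 1 := by
  simp only [leadingScalar, val_diagUnits, apply_ite Units.val, Units.val_one]

lemma leadingScalar_inv (n : ℕ) (d : Rˣ) :
    (leadingScalar m n d)⁻¹ = leadingScalar m n d⁻¹ := by
  rw [leadingScalar, leadingScalar, ← map_inv]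
  congr! with i
  simp only [Pi.inv_apply]
  split_ifs <;> simp

lemma leadingScalar_conj_apply (a b : ℕ) (d : Rˣ) (g : GL (Fin m) R) (i j : Fin m) :
    (leadingScalar m a d * g * (leadingScalar m b d)⁻¹).val i j =
      (if i.val ≤ a then d.val else 1) * g.val i j * if j.val ≤ b then d⁻¹.val else 1 := by
  rw [Units.val_mul, Units.val_mul, leadingScalar_inv, val_leadingScalar, val_leadingScalar,
    mul_diagonal, diagonal_mul]

lemma det_leadingScalar_zero (n : ℕ) (d : Rˣ) :
    GeneralLinearGroup.det (leadingScalar (n + 1) 0 d) = d := by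
  ext
  simp [val_leadingScalar]

lemma det_leadingScalar_self (n : ℕ) (d : Rˣ) :
    GeneralLinearGroup.det (leadingScalar (n + 1) n d) = d ^ (n + 1) := by
  ext
  simp [val_leadingScalar, Fin.is_le]

lemma leadingScalar_conj_mem_unitriangular_iff (n : ℕ) (d : Rˣ) (g : GL (Fin m) R) :
    leadingScalar m n d * g * (leadingScalar m n d)⁻¹ ∈ unitriangular m R 0 ↔
      g ∈ unitriangular m R 0 := by
  refine forall₃_congr fun i j hij ↦ ?_
  rw [Matrix.sub_apply, Matrix.sub_apply, leadingScalar_conj_apply]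
  by_cases h : i = j
  · subst h
    split_ifs <;> simp [mul_right_comm]
  · split_ifs <;> simp [one_apply_ne h]

lemma superdiagSum_leadingScalar_conj (hm : 1 < m) (d : Rˣ) (g : GL (Fin m) R) :
    superdiagSum (leadingScalar m 0 d * g * (leadingScalar m 0 d)⁻¹) =
      (d - 1) * g.val ⟨0, by omega⟩ ⟨1, hm⟩ + superdiagSum g := by
  have key : (leadingScalar m 0 d)⁻¹.val * subdiagonal m R * (leadingScalar m 0 d).val =
      single ⟨1, hm⟩ ⟨0, by omega⟩ (d.val - 1) + subdiagonal m R := by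
    ext i j
    rw [leadingScalar_inv, val_leadingScalar, val_leadingScalar, mul_diagonal, diagonal_mul]
    simp only [subdiagonal, of_apply, Matrix.add_apply, Matrix.single_apply, Fin.ext_iff]
    by_cases hij : i.val = j.val + 1
    · by_cases hj : j.val = 0 <;> simp [hij, hj, eq_comm]
    · have : ¬ (1 = i.val ∧ 0 = j.val) := by omega
      simp [hij, this]
  rw [superdiagSum, Units.val_mul, Units.val_mul, ← mul_assoc, trace_mul_comm, ← mul_assoc,
    ← mul_assoc, key, add_mul, trace_add, trace_single_mul, smul_eq_mul, superdiagSum]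

lemma trace_leadingScalar_conj {n : ℕ} (hn : n + 1 < m) (d : Rˣ) (g : GL (Fin m) R) :
    (leadingScalar m (n + 1) d * g * (leadingScalar m n d)⁻¹).val.trace =
      (d - 1) * g.val ⟨n + 1, hn⟩ ⟨n + 1, hn⟩ + g.val.trace := by
  have key : (leadingScalar m n d)⁻¹.val * (leadingScalar m (n + 1) d).val =
      single ⟨n + 1, hn⟩ ⟨n + 1, hn⟩ (d.val - 1) + 1 := by
    rw [leadingScalar_inv, val_leadingScalar, val_leadingScalar, diagonal_mul_diagonal]
    ext i j
    by_cases hij : i = j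
    · subst hij
      rcases lt_trichotomy i.val (n + 1) with h | h | h
      · simp [Fin.ext_iff, h.ne', Nat.le_of_lt_succ h, h.le]
      · simp [Matrix.single_apply, Fin.ext_iff, h]
      · simp [Fin.ext_iff, h.ne, h.not_ge, (Nat.lt_of_succ_lt h).not_ge]
    · have : ¬ ((⟨n + 1, hn⟩ : Fin m) = i ∧ (⟨n + 1, hn⟩ : Fin m) = j) := fun h ↦
        hij (h.1.symm.trans h.2)
      simp [hij, this]
  rw [Units.val_mul, Units.val_mul, trace_mul_comm, ← mul_assoc, key, add_mul, trace_add, one_mul,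
    trace_single_mul, smul_eq_mul]

lemma hasUnitSubdiagonal_one_leadingScalar_conj_iff (n : ℕ) (d : Rˣ) (g : GL (Fin m) R) :
    HasUnitSubdiagonal 1 (leadingScalar m (n + 1) d * g * (leadingScalar m n d)⁻¹).val ↔
      HasUnitSubdiagonal 1 g.val := by
  refine forall₃_congr fun r l hrl ↦ ?_
  rw [leadingScalar_conj_apply]
  rcases hrl.eq_or_lt with h | h
  · have : r.val ≤ n + 1 ↔ l.val ≤ n := by omega
    simp only [h, if_true, this]
    split_ifs <;> simp [mul_right_comm]
  · simp only [h.ne, if_false]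
    split_ifs <;> simp

lemma HasUnitSubdiagonal.mul_apply_succ {n : ℕ} (hm : 1 < m) (hn : n + 1 < m)
    {A B : Matrix (Fin m) (Fin m) R} (hA : HasUnitSubdiagonal 1 A) (hB : HasUnitSubdiagonal n B) :
    (A * B) ⟨n + 1, hn⟩ ⟨1, hm⟩ =
      B ⟨n, by omega⟩ ⟨1, hm⟩ + A ⟨n + 1, hn⟩ ⟨n + 1, hn⟩ := by
  rw [mul_apply, ← sum_subset (subset_univ {⟨n, by omega⟩, ⟨n + 1, hn⟩}), sum_pair (by simp),
    hA _ _ le_rfl, if_pos rfl, one_mul, hB ⟨n + 1, hn⟩ _ (by grind), if_pos (by grind), mul_one]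
  intro t _ ht
  simp only [mem_insert, mem_singleton, Fin.ext_iff, not_or] at ht
  by_cases htn : t.val < n + 1
  · rw [hA _ t (Nat.succ_le_of_lt htn), if_neg (by grind), zero_mul]
  · rw [hB t _ (by grind), if_neg (by grind), mul_zero]

end LeadingScalar

section Whittaker

open Matrix

variable {F : Type*} [Field F] {m : ℕ} {ψ : AddChar F ℂ}

/-- The generic character `u ↦ ψ (∑ i, u i (i+1))` of `unitriangular m F k`, extended by zero. -/
noncomputable def genericChar (ψ : AddChar F ℂ) (m k : ℕ) (g : GL (Fin m) F) : ℂ :=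
  if g ∈ unitriangular m F k then ψ (superdiagSum g) else 0

lemma genericChar_mul_left {u : GL (Fin m) F} (hu : u ∈ unitriangular m F 0) (g : GL (Fin m) F) :
    genericChar ψ m 0 (u * g) = ψ (superdiagSum u) * genericChar ψ m 0 g := by
  by_cases hg : g ∈ unitriangular m F 0
  · simp [genericChar, hg, mul_mem hu hg, superdiagSum_mul hu hg, AddChar.map_add_eq_mul]
  · simp [genericChar, hg, Subgroup.mul_mem_cancel_left _ hu]

lemma genericChar_leadingScalar_conj (hm : 1 < m) (d : Fˣ) (g : GL (Fin m) F) :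
    genericChar ψ m 0 (leadingScalar m 0 d * g * (leadingScalar m 0 d)⁻¹) =
      ψ ((d - 1) * g.val ⟨0, by omega⟩ ⟨1, hm⟩) * genericChar ψ m 0 g := by
  by_cases hg : g ∈ unitriangular m F 0
  · simp [genericChar, leadingScalar_conj_mem_unitriangular_iff, hg,
      superdiagSum_leadingScalar_conj hm, AddChar.map_add_eq_mul]
  · simp [genericChar, leadingScalar_conj_mem_unitriangular_iff, hg]

variable [Fintype F]

lemma sum_norm_sq_genericChar (ψ : AddChar F ℂ) (m k : ℕ) :
    ∑ g, ‖genericChar ψ m k g‖ ^ 2 = Fintype.card (unitriangular m F k) := by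
  have (g : GL (Fin m) F) :
      ‖genericChar ψ m k g‖ ^ 2 = if g ∈ unitriangular m F k then 1 else 0 := by
    unfold genericChar
    split_ifs <;> simp
  simp only [this, sum_boole, Fintype.card_subtype]

/-- The function obtained from the generic character by `n` trace convolutions. -/
noncomputable def whittaker (ψ : AddChar F ℂ) (m n : ℕ) : GL (Fin m) F → ℂ :=
  (traceConv ψ m ^ n) (genericChar ψ m 0)

lemma whittaker_mul_left (n : ℕ) {u : GL (Fin m) F} (hu : u ∈ unitriangular m F 0)
    (g : GL (Fin m) F) : whittaker ψ m n (u * g) = ψ (superdiagSum u) * whittaker ψ m n g :=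
  traceConv_pow_apply_mul_left n (genericChar_mul_left hu) g

lemma whittaker_succ (hψ : ψ ≠ 1) (n : ℕ) (g : GL (Fin m) F) :
    whittaker ψ m (n + 1) g = ∑ y, if HasUnitSubdiagonal 1 (g * y⁻¹).val
      then ψ (g * y⁻¹).val.trace * whittaker ψ m n y else 0 := by
  rw [whittaker, pow_succ', Module.End.mul_apply]
  exact traceConv_apply_of_left_equivariant hψ (fun u hu y ↦ whittaker_mul_left n hu y) g

lemma hasUnitSubdiagonal_of_whittaker_ne_zero (hψ : ψ ≠ 1) {n : ℕ} {g : GL (Fin m) F}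
    (hg : whittaker ψ m n g ≠ 0) : HasUnitSubdiagonal n g.val := by
  induction n generalizing g with
  | zero =>
    refine hasUnitSubdiagonal_zero_of_mem_unitriangular (k := 0) (of_not_not fun h ↦ hg ?_)
    simp [whittaker, genericChar, h]
  | succ n ih =>
    rw [whittaker_succ hψ] at hg
    obtain ⟨y, -, hy⟩ := exists_ne_zero_of_sum_ne_zero hg
    obtain ⟨hgy, hy⟩ := ite_ne_right_iff.mp hy
    simpa [add_comm] using hgy.mul (ih (right_ne_zero_of_mul hy))

theorem whittaker_leadingScalar_conj (hψ : ψ ≠ 1) (hm : 1 < m) {n : ℕ} (hn : n < m) (d : Fˣ)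
    (g : GL (Fin m) F) :
    whittaker ψ m n (leadingScalar m n d * g * (leadingScalar m 0 d)⁻¹) =
      ψ ((d - 1) * g.val ⟨n, hn⟩ ⟨1, hm⟩) * whittaker ψ m n g := by
  induction n generalizing g with
  | zero => exact genericChar_leadingScalar_conj hm d g
  | succ n ih =>
    rw [whittaker_succ hψ, whittaker_succ hψ, mul_sum, ← Equiv.sum_comp
      ((Equiv.mulLeft (leadingScalar m n d)).trans (Equiv.mulRight (leadingScalar m 0 d)⁻¹))]
    refine sum_congr rfl fun y _ ↦ ?_
    have hquot : leadingScalar m (n + 1) d * g * (leadingScalar m 0 d)⁻¹ *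
        (leadingScalar m n d * y * (leadingScalar m 0 d)⁻¹)⁻¹ =
          leadingScalar m (n + 1) d * (g * y⁻¹) * (leadingScalar m n d)⁻¹ := by
      group
    simp only [Equiv.trans_apply, Equiv.coe_mulLeft, Equiv.coe_mulRight, hquot,
      hasUnitSubdiagonal_one_leadingScalar_conj_iff, ih (by omega)]
    split_ifs with hw
    · rcases eq_or_ne (whittaker ψ m n y) 0 with hy | hy
      · simp [hy]
      · have hentry := hw.mul_apply_succ hm hn (hasUnitSubdiagonal_of_whittaker_ne_zero hψ hy)
        rw [← Units.val_mul, inv_mul_cancel_right] at hentry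
        rw [trace_leadingScalar_conj hn, hentry, mul_add, AddChar.map_add_eq_mul,
          AddChar.map_add_eq_mul]
        ring
    · simp

end Whittaker

section DetMass

open Matrix

variable {F : Type*} [Field F] [Fintype F] {m : ℕ} {ψ : AddChar F ℂ}

/-- The squared `L²` norm of `f` on the matrices of determinant `e`. -/
noncomputable def detMass (e : Fˣ) (f : GL (Fin m) F → ℂ) : ℝ :=
  ∑ g with GeneralLinearGroup.det g = e, ‖f g‖ ^ 2

lemma detMass_nonneg (e : Fˣ) (f : GL (Fin m) F → ℂ) : 0 ≤ detMass e f :=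
  sum_nonneg fun _ _ ↦ by positivity

lemma detMass_le_sum (e : Fˣ) (f : GL (Fin m) F → ℂ) : detMass e f ≤ ∑ g, ‖f g‖ ^ 2 :=
  sum_le_sum_of_subset_of_nonneg (filter_subset _ _) fun _ _ _ ↦ by positivity

lemma card_units_eq_mul_pow_le {n : ℕ} (hn : 0 < n) (e a : Fˣ) :
    #{s : Fˣ | a = e * s ^ n} ≤ n := by
  have (s : Fˣ) : a = e * s ^ n ↔ s ^ n = e⁻¹ * a := by rw [eq_inv_mul_iff_mul_eq, eq_comm]
  simp only [this]
  exact (card_nthRoots_subgroup_units (Units.coeHom F) Units.val_injective hn _).trans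
    (Polynomial.card_nthRoots _ _)

lemma card_units_mul_detMass_le {n : ℕ} (hn : 0 < n) {e : Fˣ} {f : GL (Fin m) F → ℂ}
    (hf : ∀ s, detMass (e * s ^ n) f = detMass e f) :
    (Fintype.card Fˣ : ℝ) * detMass e f ≤ n * ∑ g, ‖f g‖ ^ 2 :=
  calc (Fintype.card Fˣ : ℝ) * detMass e f = ∑ s : Fˣ, detMass (e * s ^ n) f := by simp [hf]
    _ = ∑ g, (#{s : Fˣ | GeneralLinearGroup.det g = e * s ^ n} : ℝ) * ‖f g‖ ^ 2 := by
        simp only [detMass, sum_filter]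
        rw [sum_comm]
        refine sum_congr rfl fun g _ ↦ ?_
        rw [← sum_filter]
        simp
    _ ≤ n * ∑ g, ‖f g‖ ^ 2 := by
        rw [mul_sum]
        gcongr
        exact_mod_cast card_units_eq_mul_pow_le hn _ _

lemma detMass_mul_pow_whittaker (hψ : ψ ≠ 1) {n : ℕ} (hn : 0 < n) (e s : Fˣ) :
    detMass (e * s ^ n) (whittaker ψ (n + 1) n) = detMass e (whittaker ψ (n + 1) n) := by
  let twist : GL (Fin (n + 1)) F ≃ GL (Fin (n + 1)) F :=
    (Equiv.mulLeft (leadingScalar (n + 1) n s)).trans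
      (Equiv.mulRight (leadingScalar (n + 1) 0 s)⁻¹)
  refine (sum_equiv twist (fun g ↦ ?_) fun g _ ↦ ?_).symm
  · have hdet : GeneralLinearGroup.det (twist g) = GeneralLinearGroup.det g * s ^ n := by
      simp only [twist, Equiv.trans_apply, Equiv.coe_mulLeft, Equiv.coe_mulRight, map_mul, map_inv,
        det_leadingScalar_self, det_leadingScalar_zero, pow_succ]
      rw [mul_right_comm, mul_inv_cancel_right, mul_comm]
    simp [hdet]
  · simp only [twist, Equiv.trans_apply, Equiv.coe_mulLeft, Equiv.coe_mulRight]
    rw [whittaker_leadingScalar_conj hψ (by omega) (by omega), norm_mul, AddChar.norm_apply,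
      one_mul]

theorem detMass_whittaker_le (hψ : ψ ≠ 1) {n : ℕ} (hn : 0 < n) (e : Fˣ) :
    Fintype.card Fˣ * detMass e (whittaker ψ (n + 1) n) ≤
      n * (((Fintype.card F : ℝ) ^ (n + 1) ^ 2) ^ n *
        Fintype.card (unitriangular (n + 1) F 0)) := by
  refine (card_units_mul_detMass_le hn (detMass_mul_pow_whittaker hψ hn e)).trans ?_
  rw [← sum_norm_sq_genericChar ψ]
  gcongr
  exact sum_norm_sq_traceConv_pow_le hψ n _

end DetMass

section RankOneUpdate

open Matrix

variable {m : ℕ} {F : Type*} [Field F]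

/-- The invertible matrix `1 + u vᵀ`. -/
noncomputable def rankOneUpdate (u v : Fin m → F) (h : 1 + v ⬝ᵥ u ≠ 0) : GL (Fin m) F :=
  GeneralLinearGroup.mkOfDetNeZero (1 + vecMulVec u v) <| by
    rwa [vecMulVec_eq Unit, det_one_add_replicateCol_mul_replicateRow]

lemma val_rankOneUpdate (u v : Fin m → F) (h : 1 + v ⬝ᵥ u ≠ 0) :
    (rankOneUpdate u v h).val = 1 + vecMulVec u v := rfl

lemma rankOneUpdate_mem_unitriangular {u v : Fin m → F} (h : 1 + v ⬝ᵥ u ≠ 0) {k : ℕ}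
    (huv : ∀ i j : Fin m, (j.val < k ∨ j ≤ i) → u i * v j = 0) :
    rankOneUpdate u v h ∈ unitriangular m F k := fun i j hij ↦ by
  rw [val_rankOneUpdate, add_sub_cancel_left, vecMulVec_apply, huv i j hij]

lemma rankOneUpdate_single_right_mem_unitriangular {u : Fin m → F} {i : Fin m}
    (h : 1 + Pi.single i 1 ⬝ᵥ u ≠ 0) (hu : ∀ r, i ≤ r → u r = 0) {k : ℕ} (hk : k ≤ i.val) :
    rankOneUpdate u (Pi.single i 1) h ∈ unitriangular m F k := by
  refine rankOneUpdate_mem_unitriangular _ fun r l hlr ↦ ?_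
  rcases eq_or_ne l i with rfl | hl
  · rw [hu r (hlr.resolve_left hk.not_gt), zero_mul]
  · rw [Pi.single_eq_of_ne hl, mul_zero]

end RankOneUpdate

section Columns

open Matrix

variable {m : ℕ} {F : Type*} [Field F] {ψ : AddChar F ℂ} {c : Fin m}

lemma mem_unitriangular_succ_iff {g : GL (Fin m) F} :
    g ∈ unitriangular m F (c.val + 1) ↔ g ∈ unitriangular m F c ∧ ∀ i, (g.val - 1) i c = 0 := by
  refine ⟨fun hg ↦ ⟨unitriangular_anti c.val.le_succ hg, fun i ↦ hg i c (.inl c.val.lt_succ_self)⟩,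
    fun ⟨hg, hc⟩ i j hij ↦ ?_⟩
  rcases eq_or_ne j c with rfl | hj
  · exact hc i
  · refine hg i j (hij.imp_left fun h ↦ ?_)
    have := Fin.val_ne_of_ne hj
    omega

/-- The restriction of `genericChar ψ m c` to the matrices `g` such that `g - 1` has `c`-th
column `y`. -/
noncomputable def columnPart (ψ : AddChar F ℂ) (c : Fin m) (y : Fin m → F) (g : GL (Fin m) F) :
    ℂ :=
  if g ∈ unitriangular m F c ∧ (g.val - 1).col c = y then ψ (superdiagSum g) else 0

/-- The product of `genericChar ψ m c` with the character `g ↦ ψ (η ⬝ᵥ y)`, where `y` is the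
`c`-th column of `g - 1`. -/
noncomputable def twistedChar (ψ : AddChar F ℂ) (c : Fin m) (η : Fin m → F) (g : GL (Fin m) F) :
    ℂ :=
  if g ∈ unitriangular m F c then ψ (η ⬝ᵥ (g.val - 1).col c + superdiagSum g) else 0

lemma columnPart_eq_zero {y : Fin m → F} (hy : ¬ ∀ i, c ≤ i → y i = 0) :
    columnPart ψ c y = 0 := by
  refine funext fun g ↦ if_neg ?_
  rintro ⟨hg, rfl⟩
  exact hy fun i hi ↦ hg i c (.inr hi)

lemma exists_mul_mem_iff_mem_unitriangular_succ {y : Fin m → F} (hy : ∀ i, c ≤ i → y i = 0) :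
    ∃ a ∈ unitriangular m F c, ∀ g, a * g ∈ unitriangular m F c ∧ ((a * g).val - 1).col c = y ↔
      g ∈ unitriangular m F (c.val + 1) := by
  let a := rankOneUpdate y (Pi.single c 1) (by simp [hy c le_rfl])
  have ha : a ∈ unitriangular m F c :=
    rankOneUpdate_single_right_mem_unitriangular _ hy le_rfl
  refine ⟨a, ha, fun g ↦ ?_⟩
  rw [mem_unitriangular_succ_iff, Subgroup.mul_mem_cancel_left _ ha]
  refine and_congr_right fun hg ↦ ?_
  have hcol : ((a * g).val - 1).col c = (g.val - 1).col c + y := by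
    ext i
    simp [a, val_rankOneUpdate, add_mul, vecMulVec_mul, vecMulVec_apply,
      apply_self_of_sub_one_mem_strictUpper hg, add_sub_right_comm]
  rw [hcol, add_eq_right, funext_iff]
  rfl

lemma exists_columnPart_mul_left {y : Fin m → F} (hy : ∀ i, c ≤ i → y i = 0) :
    ∃ a : GL (Fin m) F, GeneralLinearGroup.det a = 1 ∧
      ∀ g, columnPart ψ c y (a * g) = ψ (superdiagSum a) * genericChar ψ m (c.val + 1) g := by
  obtain ⟨a, ha, hiff⟩ := exists_mul_mem_iff_mem_unitriangular_succ hy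
  refine ⟨a, det_of_mem_unitriangular ha, fun g ↦ ?_⟩
  simp only [columnPart, genericChar, hiff, mul_ite, mul_zero]
  refine if_ctx_congr Iff.rfl (fun hg ↦ ?_) fun _ ↦ rfl
  rw [superdiagSum_mul ha (mem_unitriangular_succ_iff.mp hg).1, AddChar.map_add_eq_mul]

lemma superdiagSum_eq_of_val_eq_add {p : Fin m} (hp : p.val + 1 = c.val) {g g' : GL (Fin m) F}
    {w : Fin m → F} (hg : g'.val = g.val + vecMulVec (Pi.single p 1) w) :
    superdiagSum g' = w c + superdiagSum g := by
  have hrow : subdiagonal m F *ᵥ Pi.single p 1 = Pi.single c 1 := by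
    ext i
    simp [subdiagonal, Pi.single_apply, Fin.ext_iff, ← hp, eq_comm]
  rw [superdiagSum, hg, mul_add, trace_add, mul_vecMulVec, hrow, trace_vecMulVec, add_comm]
  simp [superdiagSum]

variable [Finite F]

/-- Conjugating `g` by `1 + e_p ηᵀ` adds to its superdiagonal sum the product of `η` with the `c`-th
column of `g - 1`. -/
lemma exists_twistedChar_eq_conj {p : Fin m} (hp : p.val + 1 = c.val) {η : Fin m → F}
    (hη : η p ≠ -1) : ∃ h : GL (Fin m) F, ∀ g,
      twistedChar ψ c η g = genericChar ψ m c (h * g * h⁻¹) := by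
  let h := rankOneUpdate (Pi.single p 1) η (by
    rwa [dotProduct_single_one, add_comm, ← sub_neg_eq_add, sub_ne_zero])
  have conj_val {g : GL (Fin m) F} (hg : g ∈ unitriangular m F c) : (h * g * h⁻¹).val =
      g.val + vecMulVec (Pi.single p 1) (η ᵥ* (g.val - 1)) := by
    have hgp : (g.val - 1) *ᵥ Pi.single p 1 = 0 := by
      ext i
      simpa using hg i p (.inl (by omega))
    have hge : g.val *ᵥ Pi.single p 1 = Pi.single p 1 := by
      rwa [sub_mulVec, one_mulVec, sub_eq_zero] at hgp
    have hηe : η ᵥ* (g.val - 1) ⬝ᵥ Pi.single p 1 = 0 := by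
      rw [← dotProduct_mulVec, hgp, dotProduct_zero]
    rw [Units.val_mul, Units.mul_inv_eq_iff_eq_mul, Units.val_mul, val_rankOneUpdate, add_mul,
      add_mul, mul_add, mul_add, mul_vecMulVec, hge, vecMulVec_mul, vecMulVec_mul_vecMulVec, hηe,
      zero_smul, vecMulVec_zero, vecMul_sub, vecMul_one, vecMulVec_sub]
    noncomm_ring
  have hnorm : h ∈ Subgroup.normalizer (unitriangular m F c : Set (GL (Fin m) F)) := by
    refine Subgroup.mem_normalizer_fintype fun g hg i j hij ↦ ?_
    rw [conj_val hg, add_sub_right_comm, Matrix.add_apply, hg i j hij, zero_add, vecMulVec_apply]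
    rcases eq_or_ne i p with rfl | hi
    · have hcol : (g.val - 1).col j = 0 := funext fun l ↦ hg l j (.inl (by omega))
      have hzero : (η ᵥ* (g.val - 1)) j = η ⬝ᵥ (g.val - 1).col j := rfl
      rw [hzero, hcol, dotProduct_zero, mul_zero]
    · rw [Pi.single_eq_of_ne hi, zero_mul]
  refine ⟨h, fun g ↦ ?_⟩
  have hmem : h * g * h⁻¹ ∈ unitriangular m F c ↔ g ∈ unitriangular m F c :=
    (Subgroup.mem_normalizer_iff.mp hnorm g).symm
  by_cases hg : g ∈ unitriangular m F c
  · rw [twistedChar, genericChar, if_pos hg, if_pos (hmem.mpr hg),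
      superdiagSum_eq_of_val_eq_add hp (conj_val hg)]
    rfl
  · rw [twistedChar, genericChar, if_neg hg, if_neg (hmem.not.mpr hg)]

lemma norm_twistedChar (η : Fin m → F) (g : GL (Fin m) F) :
    ‖twistedChar ψ c η g‖ = ‖genericChar ψ m c g‖ := by
  unfold twistedChar genericChar
  split_ifs <;> simp

end Columns

lemma card_filter_apply_eq_mul_card {ι α : Type*} [Fintype ι] [DecidableEq ι] [Fintype α]
    (i : ι) (a : α) :
    #{f : ι → α | f i = a} * Fintype.card α = Fintype.card α ^ Fintype.card ι := by
  have h := Fintype.card_filter_piFinset_const_eq_of_mem univ i (mem_univ a)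
  rw [Fintype.piFinset_univ, card_univ] at h
  rw [h, ← pow_succ, Nat.sub_one_add_one (Fintype.card_pos_iff.mpr ⟨i⟩).ne']

section ColumnInduction

open Matrix

variable {m : ℕ} {F : Type*} [Field F] [Fintype F] {ψ : AddChar F ℂ} {c : Fin m}

lemma twistedChar_eq_sum (η : Fin m → F) :
    twistedChar ψ c η = ∑ y, ψ (η ⬝ᵥ y) • columnPart ψ c y := by
  ext g
  by_cases hg : g ∈ unitriangular m F c
  · simp [twistedChar, columnPart, hg, AddChar.map_add_eq_mul, Finset.sum_apply]
  · simp [twistedChar, columnPart, hg, Finset.sum_apply]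

lemma sum_detMass_traceConv_pow_twistedChar (hψ : ψ ≠ 1) (n : ℕ) (e : Fˣ) :
    ∑ η, detMass e ((traceConv ψ m ^ n) (twistedChar ψ c η)) =
      (Fintype.card F : ℝ) ^ m * ∑ y, detMass e ((traceConv ψ m ^ n) (columnPart ψ c y)) := by
  have hinj : Function.Injective fun y : Fin m → F ↦ (dotProductBilin F F).flip y := by
    intro y y' h
    exact dotProduct_eq _ _ fun w ↦ by simpa [dotProduct_comm] using LinearMap.congr_fun h w
  simp only [detMass, twistedChar_eq_sum, map_sum, map_smul]
  rw [sum_comm, sum_comm (s := univ (α := Fin m → F)), mul_sum]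
  refine sum_congr rfl fun g _ ↦ ?_
  simpa [Finset.sum_apply] using
    sum_norm_sq_sum_addChar hψ hinj fun y ↦ (traceConv ψ m ^ n) (columnPart ψ c y) g

lemma detMass_traceConv_pow_columnPart (n : ℕ) (e : Fˣ) {y : Fin m → F}
    (hy : ∀ i, c ≤ i → y i = 0) :
    detMass e ((traceConv ψ m ^ n) (columnPart ψ c y)) =
      detMass e ((traceConv ψ m ^ n) (genericChar ψ m (c.val + 1))) := by
  obtain ⟨a, hdet, ha⟩ := exists_columnPart_mul_left (ψ := ψ) hy
  refine (sum_equiv (Equiv.mulLeft a) (fun g ↦ ?_) fun g _ ↦ ?_).symm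
  · simp [hdet]
  · rw [Equiv.coe_mulLeft, traceConv_pow_apply_mul_left n ha, norm_mul, AddChar.norm_apply, one_mul]

lemma sum_detMass_traceConv_pow_columnPart (n : ℕ) (e : Fˣ) :
    ∑ y, detMass e ((traceConv ψ m ^ n) (columnPart ψ c y)) =
      #{y : Fin m → F | ∀ i, c ≤ i → y i = 0} *
        detMass e ((traceConv ψ m ^ n) (genericChar ψ m (c.val + 1))) := by
  rw [← nsmul_eq_mul, ← sum_const, sum_filter]
  refine sum_congr rfl fun y _ ↦ ?_
  split_ifs with hy
  · exact detMass_traceConv_pow_columnPart n e hy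
  · simp [columnPart_eq_zero hy, detMass]

lemma card_mul_card_unitriangular_succ :
    #{y : Fin m → F | ∀ i, c ≤ i → y i = 0} * Fintype.card (unitriangular m F (c.val + 1)) =
      Fintype.card (unitriangular m F c) := by
  have hfiber (y : Fin m → F) :
      #{g ∈ univ.filter (· ∈ unitriangular m F c) | (g.val - 1).col c = y} =
        if ∀ i, c ≤ i → y i = 0 then Fintype.card (unitriangular m F (c.val + 1)) else 0 := by
    rw [filter_filter]
    split_ifs with hy
    · obtain ⟨a, -, hiff⟩ := exists_mul_mem_iff_mem_unitriangular_succ hy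
      rw [Fintype.card_subtype]
      exact (card_equiv (Equiv.mulLeft a) fun g ↦ by simp [← hiff]).symm
    · refine card_eq_zero.mpr (filter_eq_empty_iff.mpr fun g _ ↦ ?_)
      rintro ⟨hg, rfl⟩
      exact hy fun i hi ↦ hg i c (.inr hi)
  rw [Fintype.card_subtype (· ∈ unitriangular m F c), card_eq_sum_card_fiberwise
    (f := fun g : GL (Fin m) F ↦ (g.val - 1).col c) (t := univ) fun _ _ ↦ mem_univ _]
  simp only [hfiber, ← sum_filter, sum_const, smul_eq_mul]

lemma detMass_traceConv_pow_twistedChar {p : Fin m} (hp : p.val + 1 = c.val) (n : ℕ) (e : Fˣ)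
    {η : Fin m → F} (hη : η p ≠ -1) :
    detMass e ((traceConv ψ m ^ n) (twistedChar ψ c η)) =
      detMass e ((traceConv ψ m ^ n) (genericChar ψ m c)) := by
  obtain ⟨h, hh⟩ := exists_twistedChar_eq_conj (ψ := ψ) hp hη
  rw [funext hh, traceConv_pow_comp_conj]
  exact sum_equiv (MulAut.conj h).toEquiv (fun g ↦ by simp) fun g _ ↦ rfl

lemma detMass_traceConv_pow_twistedChar_le (hψ : ψ ≠ 1) (n : ℕ) (e : Fˣ) (η : Fin m → F) :
    detMass e ((traceConv ψ m ^ n) (twistedChar ψ c η)) ≤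
      ((Fintype.card F : ℝ) ^ m ^ 2) ^ n * Fintype.card (unitriangular m F c) := by
  refine (detMass_le_sum e _).trans ((sum_norm_sq_traceConv_pow_le hψ n _).trans_eq ?_)
  simp only [norm_twistedChar, sum_norm_sq_genericChar]

/-- Of the `q ^ m` twists of the generic character of `unitriangular m F c`, all but `q ^ (m - 1)`
are conjugate to it. -/
lemma pow_mul_detMass_traceConv_pow_genericChar_succ_le (hψ : ψ ≠ 1) {p : Fin m}
    (hp : p.val + 1 = c.val) (n : ℕ) (e : Fˣ) :
    (Fintype.card F : ℝ) ^ m * (#{y : Fin m → F | ∀ i, c ≤ i → y i = 0} *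
        detMass e ((traceConv ψ m ^ n) (genericChar ψ m (c.val + 1)))) ≤
      (Fintype.card F : ℝ) ^ m / Fintype.card F *
          (((Fintype.card F : ℝ) ^ m ^ 2) ^ n * Fintype.card (unitriangular m F c)) +
        (Fintype.card F : ℝ) ^ m * detMass e ((traceConv ψ m ^ n) (genericChar ψ m c)) := by
  have hq : (Fintype.card F : ℝ) ≠ 0 := by exact_mod_cast Fintype.card_ne_zero
  have hbad : (#{η : Fin m → F | η p = -1} : ℝ) = (Fintype.card F : ℝ) ^ m / Fintype.card F := by
    have h := card_filter_apply_eq_mul_card p (-1 : F)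
    rw [Fintype.card_fin] at h
    rw [eq_div_iff hq]
    exact_mod_cast h
  have hgood : (#{η : Fin m → F | ¬ η p = -1} : ℝ) ≤ (Fintype.card F : ℝ) ^ m := by
    exact_mod_cast (card_filter_le _ _).trans_eq (by simp)
  rw [← sum_detMass_traceConv_pow_columnPart, ← sum_detMass_traceConv_pow_twistedChar hψ,
    ← sum_filter_add_sum_filter_not univ fun η : Fin m → F ↦ η p = -1]
  refine add_le_add ?_ ?_
  · rw [← hbad, ← nsmul_eq_mul]
    exact sum_le_card_nsmul _ _ _ fun η _ ↦ detMass_traceConv_pow_twistedChar_le hψ n e η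
  · rw [sum_congr rfl fun η hη ↦
      detMass_traceConv_pow_twistedChar hp n e (mem_filter.mp hη).2, sum_const, nsmul_eq_mul]
    exact mul_le_mul_of_nonneg_right hgood (detMass_nonneg _ _)

lemma detMass_traceConv_pow_genericChar_succ_le (hψ : ψ ≠ 1) {p : Fin m} (hp : p.val + 1 = c.val)
    (n : ℕ) (e : Fˣ) {B : ℝ}
    (hB : detMass e ((traceConv ψ m ^ n) (genericChar ψ m c)) ≤
      ((Fintype.card F : ℝ) ^ m ^ 2) ^ n * Fintype.card (unitriangular m F c) * B) :
    detMass e ((traceConv ψ m ^ n) (genericChar ψ m (c.val + 1))) ≤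
      ((Fintype.card F : ℝ) ^ m ^ 2) ^ n * Fintype.card (unitriangular m F (c.val + 1)) *
        (B + 1 / Fintype.card F) := by
  have hq : (0 : ℝ) < Fintype.card F := by exact_mod_cast Fintype.card_pos
  have hN : (0 : ℝ) < #{y : Fin m → F | ∀ i, c ≤ i → y i = 0} := by
    exact_mod_cast card_pos.mpr ⟨0, by simp⟩
  have hcard : (#{y : Fin m → F | ∀ i, c ≤ i → y i = 0} : ℝ) *
      Fintype.card (unitriangular m F (c.val + 1)) = Fintype.card (unitriangular m F c) := by
    exact_mod_cast card_mul_card_unitriangular_succ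
  refine le_of_mul_le_mul_left (le_of_mul_le_mul_left
    ((pow_mul_detMass_traceConv_pow_genericChar_succ_le hψ hp n e).trans ?_) (pow_pos hq m)) hN
  refine (add_le_add_right (mul_le_mul_of_nonneg_left hB (by positivity)) _).trans_eq ?_
  rw [← hcard]
  ring

theorem detMass_traceConv_pow_single_le (hψ : ψ ≠ 1) {n : ℕ} (hn : 0 < n) (e : Fˣ) :
    detMass e ((traceConv ψ (n + 1) ^ n) (Pi.single 1 1)) ≤
      ((Fintype.card F : ℝ) ^ (n + 1) ^ 2) ^ n * (2 * n / Fintype.card Fˣ) := by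
  have hunits : (0 : ℝ) < Fintype.card Fˣ := by exact_mod_cast Fintype.card_pos
  have hle : (Fintype.card Fˣ : ℝ) ≤ Fintype.card F := by
    exact_mod_cast Fintype.card_le_of_injective _ Units.val_injective
  have hstart : genericChar ψ (n + 1) 1 = genericChar ψ (n + 1) 0 := by
    simp only [genericChar, unitriangular_one, funext_iff, implies_true]
  have hend : genericChar ψ (n + 1) (n + 1) = Pi.single 1 1 := by
    ext g
    rcases eq_or_ne g 1 with rfl | hg
    · simp [genericChar, unitriangular_self, superdiagSum_one]
    · simp [genericChar, unitriangular_self, hg]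
  have hind (j : ℕ) (hj : j ≤ n) :
      detMass e ((traceConv ψ (n + 1) ^ n) (genericChar ψ (n + 1) (j + 1))) ≤
        ((Fintype.card F : ℝ) ^ (n + 1) ^ 2) ^ n * Fintype.card (unitriangular (n + 1) F (j + 1)) *
          (n / Fintype.card Fˣ + j / Fintype.card F) := by
    induction j with
    | zero =>
      rw [zero_add, hstart, unitriangular_one, Nat.cast_zero, zero_div, add_zero, mul_div_assoc',
        le_div_iff₀' hunits, mul_comm _ (n : ℝ)]
      exact detMass_whittaker_le hψ hn e
    | succ j ih =>
      have := detMass_traceConv_pow_genericChar_succ_le hψ (p := ⟨j, by omega⟩)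
        (c := ⟨j + 1, by omega⟩) rfl n e (ih (by omega))
      rwa [add_assoc (_ / _), ← add_div, ← Nat.cast_succ] at this
  have hbot : Fintype.card (unitriangular (n + 1) F (n + 1)) = 1 := by
    rw [← Nat.card_eq_fintype_card, unitriangular_self, Subgroup.card_bot]
  refine (hend ▸ hind n le_rfl).trans ?_
  rw [hbot, Nat.cast_one, mul_one, two_mul, add_div]
  gcongr

end ColumnInduction

section DiagonalUnits

open Matrix

variable {m : ℕ} {R : Type*} [CommRing R]

lemma diagUnits_inv_mul_mem_unitriangular_iff {t : Fin m → Rˣ} {g : GL (Fin m) R} :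
    (diagUnits m R t)⁻¹ * g ∈ unitriangular m R 0 ↔
      g.val.IsUpperTriangular ∧ ∀ i, g.val i i = t i := by
  have hentry (i j : Fin m) : (((diagUnits m R t)⁻¹ * g).val - 1) i j = 0 ↔
      g.val i j = if i = j then (t i : R) else 0 := by
    rw [← map_inv, Units.val_mul, val_diagUnits, Matrix.sub_apply, diagonal_mul, sub_eq_zero,
      Pi.inv_apply, Units.inv_mul_eq_iff_eq_mul, Matrix.one_apply, mul_ite, mul_one, mul_zero]
  simp only [mem_unitriangular, mem_strictUpper, hentry, Nat.not_lt_zero, false_or]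
  refine ⟨fun h ↦ ⟨fun i j hij ↦ ?_, fun i ↦ by simpa using h i i le_rfl⟩, fun h i j hij ↦ ?_⟩
  · simpa [(show j < i from hij).ne'] using h i j (show j < i from hij).le
  · rcases hij.eq_or_lt with rfl | hij
    · simpa using h.2 j
    · rw [if_neg hij.ne', h.1 hij]

lemma diagUnits_mem_unitriangular_iff {t : Fin m → Rˣ} :
    diagUnits m R t ∈ unitriangular m R 0 ↔ t = 1 := by
  rw [← inv_mem_iff, ← mul_one (diagUnits m R t)⁻¹, diagUnits_inv_mul_mem_unitriangular_iff,
    Units.val_one, and_iff_right blockTriangular_one, funext_iff]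
  exact forall_congr' fun i ↦ by rw [one_apply_eq, eq_comm, Pi.one_apply, Units.val_eq_one]

end DiagonalUnits

section HyperKloosterman

open Matrix

variable {F : Type*} [Field F] [Fintype F] {m : ℕ} {ψ : AddChar F ℂ}

/-- The hyper-Kloosterman sum `s ↦ ∑ ψ (x₁ + ⋯ + xₙ)` over the `n`-tuples of units with product
`s`. -/
noncomputable def hyperKloosterman (ψ : AddChar F ℂ) (n : ℕ) : Fˣ → ℂ :=
  (convEnd fun x : Fˣ ↦ ψ x) ^ n <| Pi.single 1 1

lemma hyperKloosterman_succ (n : ℕ) (s : Fˣ) :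
    hyperKloosterman ψ (n + 1) s = ∑ t : Fˣ, ψ t * hyperKloosterman ψ n (t⁻¹ * s) := by
  rw [hyperKloosterman, pow_succ', Module.End.mul_apply, convEnd_apply]
  refine Fintype.sum_equiv (Equiv.divLeft s) _ _ fun y ↦ ?_
  simp [div_eq_mul_inv, hyperKloosterman]

lemma prod_hyperKloosterman_succ (n : ℕ) (s : Fin m → Fˣ) :
    ∏ i, hyperKloosterman ψ (n + 1) (s i) =
      ∑ t : Fin m → Fˣ, (∏ i, ψ (t i)) * ∏ i, hyperKloosterman ψ n ((t⁻¹ * s) i) := by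
  simp only [hyperKloosterman_succ, prod_univ_sum, Fintype.piFinset_univ, prod_mul_distrib,
    Pi.mul_apply, Pi.inv_apply]

/-- The indicator function of the unitriangular group. -/
noncomputable def unitriangularIndicator (m : ℕ) (F : Type*) [Field F] : GL (Fin m) F → ℂ :=
  (unitriangular m F 0 : Set (GL (Fin m) F)).indicator 1

lemma sum_prod_addChar_mul_indicator_unitriangular (g : GL (Fin m) F) :
    ∑ t : Fin m → Fˣ, (∏ i, ψ (t i)) * unitriangularIndicator m F ((diagUnits m F t)⁻¹ * g) =
      if g.val.IsUpperTriangular then ψ g.val.trace else 0 := by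
  simp only [unitriangularIndicator, Set.indicator_apply, SetLike.mem_coe,
    diagUnits_inv_mul_mem_unitriangular_iff]
  split_ifs with hg
  · have hdiag (i : Fin m) : g.val i i ≠ 0 := by
      have := g.det_ne_zero
      rw [det_of_isUpperTriangular hg] at this
      exact prod_ne_zero_iff.mp this i (mem_univ i)
    have hiff (t : Fin m → Fˣ) :
        (g.val.IsUpperTriangular ∧ ∀ i, g.val i i = t i) ↔ t = fun i ↦ Units.mk0 _ (hdiag i) := by
      simp [hg, funext_iff, Units.ext_iff, eq_comm]
    simp only [hiff, Pi.one_apply, mul_ite, mul_one, mul_zero, sum_ite_eq', mem_univ, if_true,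
      Units.val_mk0]
    exact (map_prod ψ.toMonoidHom (fun i ↦ .ofAdd (g.val i i)) univ).symm
  · simp [hg]

lemma traceConv_unitriangularIndicator (hψ : ψ ≠ 1) (g : GL (Fin m) F) :
    traceConv ψ m (unitriangularIndicator m F) g = Fintype.card (unitriangular m F 0) *
      ∑ t : Fin m → Fˣ, (∏ i, ψ (t i)) *
        unitriangularIndicator m F ((diagUnits m F t)⁻¹ * g) := by
  rw [sum_prod_addChar_mul_indicator_unitriangular, mul_ite, mul_zero,
    ← sum_unitriangular_addChar_trace hψ, traceConv_apply]
  simp only [unitriangularIndicator, Set.indicator_apply, SetLike.mem_coe, Pi.one_apply, mul_ite,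
    mul_one, mul_zero]
  rw [← sum_filter, sum_subtype (p := (· ∈ unitriangular m F 0)) _ (by simp)]
  exact Fintype.sum_equiv (Equiv.inv _) _ _ fun v ↦ by simp

lemma traceConv_pow_unitriangularIndicator_diagUnits (hψ : ψ ≠ 1) (n : ℕ) (s : Fin m → Fˣ) :
    (traceConv ψ m ^ n) (unitriangularIndicator m F) (diagUnits m F s) =
      Fintype.card (unitriangular m F 0) ^ n * ∏ i, hyperKloosterman ψ n (s i) := by
  induction n generalizing s with
  | zero =>
    simp [hyperKloosterman, unitriangularIndicator, Set.indicator_apply, Pi.single_apply,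
      diagUnits_mem_unitriangular_iff, funext_iff, prod_ite_zero]
  | succ n ih =>
    have hT : traceConv ψ m (unitriangularIndicator m F) =
        (Fintype.card (unitriangular m F 0) : ℂ) • ∑ t : Fin m → Fˣ, (∏ i, ψ (t i)) •
          fun g ↦ unitriangularIndicator m F ((diagUnits m F t)⁻¹ * g) := by
      ext g
      simp [traceConv_unitriangularIndicator hψ]
    rw [pow_succ, Module.End.mul_apply, hT, map_smul, map_sum]
    simp only [map_smul, traceConv_pow_comp_mul_left, Pi.smul_apply, Finset.sum_apply, ← map_inv,
      ← map_mul, ih, smul_eq_mul, prod_hyperKloosterman_succ, mul_left_comm _ (_ ^ n)]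
    rw [← mul_sum, pow_succ', mul_assoc]

lemma traceConv_pow_single_conj (n : ℕ) (g h : GL (Fin m) F) :
    (traceConv ψ m ^ n) (Pi.single 1 1) (h * g * h⁻¹) =
      (traceConv ψ m ^ n) (Pi.single 1 1) g := by
  have hconj : (fun g ↦ Pi.single (M := fun _ ↦ ℂ) 1 1 (h * g * h⁻¹)) =
      (Pi.single 1 1 : GL (Fin m) F → ℂ) := by
    ext g
    simp [Pi.single_apply]
  rw [← congrFun (traceConv_pow_comp_conj n _ h) g, hconj]

theorem sum_unitriangular_traceConv_pow_single (hψ : ψ ≠ 1) (m n : ℕ) :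
    ∑ u : unitriangular m F 0, (traceConv ψ m ^ n) (Pi.single 1 1) (u : GL (Fin m) F) =
      Fintype.card (unitriangular m F 0) ^ n * hyperKloosterman ψ n 1 ^ m := by
  have hsum : unitriangularIndicator m F =
      ∑ u : unitriangular m F 0, fun g ↦ Pi.single (M := fun _ ↦ ℂ) 1 1 (g * u.val) := by
    ext g
    simp only [Finset.sum_apply, Pi.single_apply, mul_eq_one_iff_inv_eq]
    rw [← sum_subtype {u | u ∈ unitriangular m F 0} (by simp)
      fun u ↦ if g⁻¹ = u then (1 : ℂ) else 0, sum_ite_eq]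
    simp [unitriangularIndicator, Set.indicator_apply]
  have h := traceConv_pow_unitriangularIndicator_diagUnits hψ n (1 : Fin m → Fˣ)
  rw [hsum, map_one, map_sum, Finset.sum_apply] at h
  simpa [traceConv, convEnd_pow_comp_mul_right] using h

end HyperKloosterman

section Elimination

open Matrix

/-- The `j`-th column of `X` vanishes off row `i`, and the `i`-th row vanishes off column `j`. -/
def IsPivot {ι κ R : Type*} [Zero R] (i : ι) (j : κ) (X : Matrix ι κ R) : Prop :=
  (∀ r ≠ i, X r j = 0) ∧ ∀ t ≠ j, X i t = 0

variable {m : ℕ} {F : Type*} [Field F]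

lemma exists_apply_ne_zero_and_forall_gt_eq_zero (g : GL (Fin m) F) (j : Fin m) :
    ∃ i, g.val i j ≠ 0 ∧ ∀ r, i < r → g.val r j = 0 := by
  have hne : Finset.Nonempty {i | g.val i j ≠ 0} := by
    rw [filter_nonempty_iff]
    by_contra! h
    exact g.det_ne_zero (det_eq_zero_of_column_eq_zero j fun i ↦ h i (mem_univ i))
  refine ⟨_, (mem_filter.mp (max'_mem _ hne)).2, fun r hr ↦ ?_⟩
  by_contra h
  exact hr.not_ge (le_max' _ r (mem_filter.mpr ⟨mem_univ r, h⟩))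

lemma rankOneUpdate_single_left_mem_unitriangular {v : Fin m → F} {c : Fin m}
    (h : 1 + v ⬝ᵥ Pi.single c 1 ≠ 0) (hv : ∀ t ≤ c, v t = 0) :
    rankOneUpdate (Pi.single c 1) v h ∈ unitriangular m F 0 := by
  refine rankOneUpdate_mem_unitriangular _ fun l t htl ↦ ?_
  rcases eq_or_ne l c with rfl | hl
  · rw [hv t (by simpa using htl), mul_zero]
  · rw [Pi.single_eq_of_ne hl, zero_mul]

lemma rankOneUpdate_mul_mul_rankOneUpdate_apply {u v : Fin m → F} {i c : Fin m}
    (hu : 1 + Pi.single i 1 ⬝ᵥ u ≠ 0) (hv : 1 + v ⬝ᵥ Pi.single c 1 ≠ 0) (X : GL (Fin m) F)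
    (r t : Fin m) :
    (rankOneUpdate u (Pi.single i 1) hu * X * rankOneUpdate (Pi.single c 1) v hv).val r t =
      X.val r t + u r * X.val i t + (X.val r c + u r * X.val i c) * v t := by
  simp [val_rankOneUpdate, add_mul, mul_add, vecMulVec_mul, mul_vecMulVec, vecMulVec_apply]

lemma exists_mul_mul_isPivot_le {X : GL (Fin m) F} {c : Fin m}
    (hX : ∀ j < c, ∃ i, IsPivot i j X.val) :
    ∃ a ∈ unitriangular m F 0, ∃ b ∈ unitriangular m F 0,
      ∀ j ≤ c, ∃ i, IsPivot i j (a * X * b).val := by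
  obtain ⟨i, hi, hlast⟩ := exists_apply_ne_zero_and_forall_gt_eq_zero X c
  have hrow (t : Fin m) (ht : t < c) : X.val i t = 0 := by
    obtain ⟨r, hcol, hr⟩ := hX t ht
    refine hcol i ?_
    rintro rfl
    exact hi (hr c ht.ne')
  let u : Fin m → F := fun r ↦ if r = i then 0 else -X.val r c / X.val i c
  let v : Fin m → F := fun t ↦ if t = c then 0 else -X.val i t / X.val i c
  let a := rankOneUpdate u (Pi.single i 1) (by simp [u])
  let b := rankOneUpdate (Pi.single c 1) v (by simp [v])
  have apply_eq (r t : Fin m) : (a * X * b).val r t =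
      X.val r t + u r * X.val i t + (X.val r c + u r * X.val i c) * v t :=
    rankOneUpdate_mul_mul_rankOneUpdate_apply ..
  have col_eq (r : Fin m) (hr : r ≠ i) : X.val r c + u r * X.val i c = 0 := by
    simp [u, hr, hi]
  have u_eq_zero {r : Fin m} (hr : r = i ∨ X.val r c = 0) : u r = 0 := by
    rcases hr with rfl | hr <;> simp [u, *]
  have v_eq_zero {t : Fin m} (ht : t ≤ c) : v t = 0 := by
    rcases ht.eq_or_lt with rfl | ht <;> simp [v, *]
  refine ⟨a, rankOneUpdate_single_right_mem_unitriangular _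
      (fun r hr ↦ u_eq_zero (hr.eq_or_lt.imp Eq.symm (hlast r))) (Nat.zero_le _), b,
    rankOneUpdate_single_left_mem_unitriangular _ fun t ht ↦ v_eq_zero ht, fun j hj ↦ ?_⟩
  rcases hj.eq_or_lt with rfl | hj'
  · refine ⟨i, fun r hr ↦ ?_, fun t ht ↦ ?_⟩
    · rw [apply_eq, col_eq r hr, v_eq_zero le_rfl, mul_zero, zero_add]
    · rw [apply_eq, u_eq_zero (.inl rfl)]
      simp [v, ht, mul_div_cancel₀ _ hi]
  · obtain ⟨r, hcol, hr⟩ := hX j hj'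
    have hrc : X.val r c = 0 := hr c hj'.ne'
    refine ⟨r, fun s hs ↦ ?_, fun t ht ↦ ?_⟩
    · rw [apply_eq, hcol s hs, hrow j hj', v_eq_zero hj]
      simp
    · rw [apply_eq, hr t ht, hrc, u_eq_zero (.inr hrc)]
      simp

theorem exists_mul_mul_isPivot (g : GL (Fin m) F) :
    ∃ a ∈ unitriangular m F 0, ∃ b ∈ unitriangular m F 0,
      ∀ j, ∃ i, IsPivot i j (a * g * b).val := by
  have hind (k : ℕ) : ∃ a ∈ unitriangular m F 0, ∃ b ∈ unitriangular m F 0,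
      ∀ j : Fin m, j.val < k → ∃ i, IsPivot i j (a * g * b).val := by
    induction k with
    | zero => exact ⟨1, one_mem _, 1, one_mem _, by simp⟩
    | succ k ih =>
      obtain ⟨a, ha, b, hb, hab⟩ := ih
      rcases lt_or_ge k m with hk | hk
      · obtain ⟨a', ha', b', hb', hab'⟩ := exists_mul_mul_isPivot_le (c := ⟨k, hk⟩) hab
        refine ⟨a' * a, mul_mem ha' ha, b * b', mul_mem hb hb', fun j hj ↦ ?_⟩
        simpa only [mul_assoc] using hab' j (Nat.le_of_lt_succ hj)
      · exact ⟨a, ha, b, hb, fun j _ ↦ hab j (j.2.trans_le hk)⟩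
  obtain ⟨a, ha, b, hb, hab⟩ := hind m
  exact ⟨a, ha, b, hb, fun j ↦ hab j j.2⟩

lemma card_forall_exists_isPivot_le [Fintype F] :
    #{g : GL (Fin m) F | ∀ j, ∃ i, IsPivot i j g.val} ≤ (m * Fintype.card F) ^ m := by
  let columns (p : Fin m → Fin m × F) : Matrix (Fin m) (Fin m) F :=
    of fun r j ↦ if r = (p j).1 then (p j).2 else 0
  have hsub : ({g : GL (Fin m) F | ∀ j, ∃ i, IsPivot i j g.val} : Finset _).image Units.val ⊆
      univ.image columns := by
    rw [image_subset_iff]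
    intro g hg
    choose i hi using (mem_filter.mp hg).2
    refine mem_image.mpr ⟨fun j ↦ (i j, g.val (i j) j), mem_univ _, Matrix.ext fun r j ↦ ?_⟩
    simp only [columns, of_apply]
    split_ifs with hr
    · rw [hr]
    · exact ((hi j).1 r hr).symm
  rw [← card_image_of_injective _ Units.val_injective]
  exact (card_le_card hsub).trans (card_image_le.trans_eq (by simp))

end Elimination

section Cardinalities

open Matrix

variable {F : Type*} [Field F] [Fintype F]

theorem card_unitriangular (m : ℕ) :
    Fintype.card (unitriangular m F 0) = Fintype.card F ^ (m * (m - 1) / 2) := by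
  have hcol (c : Fin m) : #{y : Fin m → F | ∀ i, c ≤ i → y i = 0} = Fintype.card F ^ c.val := by
    have : ({y : Fin m → F | ∀ i, c ≤ i → y i = 0} : Finset _) =
        Fintype.piFinset fun i ↦ if i < c then univ else {0} := by
      ext y
      simp only [mem_filter, mem_univ, true_and, Fintype.mem_piFinset]
      refine forall_congr' fun i ↦ ?_
      split_ifs with h <;> simp [h, le_of_not_gt]
    simp [this, Fintype.card_piFinset, apply_ite card, prod_ite, filter_gt_eq_Iio]
  have hind (k : ℕ) (hk : k ≤ m) : Fintype.card (unitriangular m F 0) =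
      Fintype.card F ^ (∑ c ∈ range k, c) * Fintype.card (unitriangular m F k) := by
    induction k with
    | zero => simp
    | succ k ih =>
      rw [ih (by omega), sum_range_succ, pow_add, mul_assoc,
        ← card_mul_card_unitriangular_succ (c := ⟨k, hk⟩), hcol]
  rw [hind m le_rfl, sum_range_id, unitriangular_self]
  simp

lemma card_pow_sq_le_two_pow_mul_card_GL (m : ℕ) :
    Fintype.card F ^ m ^ 2 ≤ 2 ^ m * Fintype.card (GL (Fin m) F) := by
  have hfactor (i : Fin m) : Fintype.card F ^ m ≤
      2 * (Fintype.card F ^ m - Fintype.card F ^ i.val) := by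
    have : 2 * Fintype.card F ^ i.val ≤ Fintype.card F ^ m := calc
      2 * Fintype.card F ^ i.val ≤ Fintype.card F ^ (i.val + 1) := by
        rw [pow_succ']
        gcongr
        exact Fintype.one_lt_card
      _ ≤ Fintype.card F ^ m := Nat.pow_le_pow_right Fintype.card_pos i.2
    omega
  have h := prod_le_prod' fun i (_ : i ∈ univ) ↦ hfactor i
  rwa [prod_mul_distrib, ← card_GL_field, prod_const, prod_const, card_univ, Fintype.card_fin,
    ← pow_mul, ← sq, Nat.card_eq_fintype_card] at h

end Cardinalities

section HyperKloostermanBound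

open Matrix

variable {F : Type*} [Field F] [Fintype F] {ψ : AddChar F ℂ} {n : ℕ}

lemma card_GL_mul_norm_sq_hyperKloosterman_le (hψ : ψ ≠ 1) (hn : 0 < n) :
    Fintype.card (GL (Fin (n + 1)) F) *
        ‖(Fintype.card (unitriangular (n + 1) F 0) : ℂ) ^ n *
          hyperKloosterman ψ n 1 ^ (n + 1)‖ ^ 2 ≤
      ((Fintype.card F : ℝ) ^ (n + 1) ^ 2) ^ n * (2 * n / Fintype.card Fˣ) *
        (((n + 1) * Fintype.card F) ^ (n + 1) *
          (Fintype.card (unitriangular (n + 1) F 0) : ℝ) ^ 2) := by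
  let U := unitriangular (n + 1) F 0
  have hdet (g x : GL (Fin (n + 1)) F) (hx : x⁻¹ * g * x ∈ U) :
      g ∈ ({g | GeneralLinearGroup.det g = 1} : Finset _) := by
    simpa [mul_right_comm] using det_of_mem_unitriangular hx
  have hcount : ∑ u : U, conjCount U u ≤
      ((n + 1) * Fintype.card F) ^ (n + 1) * Fintype.card U ^ 2 := by
    refine (sum_conjCount_le U (W := {g | ∀ j, ∃ i, IsPivot i j g.val}) fun g ↦ ?_).trans
      (Nat.mul_le_mul_right _ card_forall_exists_isPivot_le)
    simpa using exists_mul_mul_isPivot g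
  rw [← sum_unitriangular_traceConv_pow_single hψ]
  refine (card_mul_norm_sq_sum_le U (traceConv_pow_single_conj n) hdet).trans ?_
  gcongr
  · exact detMass_traceConv_pow_single_le hψ hn 1
  · exact_mod_cast hcount

theorem norm_sq_hyperKloosterman_one_pow_le (hψ : ψ ≠ 1) (hn : 0 < n) :
    (‖hyperKloosterman ψ n 1‖ ^ 2) ^ (n + 1) ≤
      (2 * (n + 1) * (Fintype.card F : ℝ) ^ n) ^ (n + 1) * (2 * n / Fintype.card Fˣ) := by
  have hU : (Fintype.card (unitriangular (n + 1) F 0) : ℝ) ^ 2 =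
      (Fintype.card F : ℝ) ^ ((n + 1) * n) := by
    rw [card_unitriangular, Nat.cast_pow, ← pow_mul,
      Nat.div_mul_cancel (Nat.even_mul_pred_self _).two_dvd, Nat.add_sub_cancel]
  have hGL : (Fintype.card F : ℝ) ^ (n + 1) ^ 2 ≤ 2 ^ (n + 1) * Fintype.card (GL (Fin (n + 1)) F) :=
    mod_cast card_pow_sq_le_two_pow_mul_card_GL (F := F) (n + 1)
  have hbound := card_GL_mul_norm_sq_hyperKloosterman_le hψ hn
  rw [norm_mul, norm_pow, norm_pow, Complex.norm_natCast, mul_pow, pow_right_comm, hU] at hbound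
  have hq : (0 : ℝ) < Fintype.card F := mod_cast Fintype.card_pos
  set q : ℝ := (Fintype.card F : ℝ)
  refine le_of_mul_le_mul_left ?_ (by positivity : 0 < q ^ (n + 1) ^ 2 * (q ^ ((n + 1) * n)) ^ n)
  calc q ^ (n + 1) ^ 2 * (q ^ ((n + 1) * n)) ^ n * (‖hyperKloosterman ψ n 1‖ ^ 2) ^ (n + 1)
      ≤ 2 ^ (n + 1) * Fintype.card (GL (Fin (n + 1)) F) * (q ^ ((n + 1) * n)) ^ n *
          (‖hyperKloosterman ψ n 1‖ ^ 2) ^ (n + 1) := by gcongr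
    _ = 2 ^ (n + 1) * (Fintype.card (GL (Fin (n + 1)) F) *
          ((q ^ ((n + 1) * n)) ^ n * (‖hyperKloosterman ψ n 1‖ ^ (n + 1)) ^ 2)) := by ring
    _ ≤ 2 ^ (n + 1) * ((q ^ (n + 1) ^ 2) ^ n * (2 * n / Fintype.card Fˣ) *
          (((n + 1) * q) ^ (n + 1) * q ^ ((n + 1) * n))) := by gcongr
    _ = _ := by
        rw [mul_pow _ q, mul_pow _ (q ^ n), mul_pow 2]
        ring

end HyperKloostermanBound

section GaussSumMoments

open scoped BigOperators

variable {F : Type*} [Field F] [Fintype F] {ψ : AddChar F ℂ} {χ : Fˣ →* ℂˣ}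

lemma sum_mul_convEnd {G R : Type*} [Group G] [Fintype G] [CommRing R] (χ : G →* R)
    (φ f : G → R) :
    ∑ g, χ g * convEnd φ f g = (∑ g, φ g * χ g) * ∑ g, χ g * f g := by
  simp only [convEnd_apply, mul_sum]
  rw [sum_comm]
  refine sum_congr rfl fun y _ ↦ ?_
  rw [sum_mul, ← Equiv.sum_comp (Equiv.mulRight y)]
  refine sum_congr rfl fun x _ ↦ ?_
  rw [Equiv.coe_mulRight, mul_inv_cancel_right, map_mul]
  ring

lemma sum_mul_hyperKloosterman (ψ : AddChar F ℂ) (χ : Fˣ →* ℂˣ) (n : ℕ) :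
    ∑ s, (χ s : ℂ) * hyperKloosterman ψ n s = gaussSum' ψ χ ^ n := by
  induction n with
  | zero => simp [hyperKloosterman, Pi.single_apply]
  | succ n ih =>
    rw [pow_succ', ← ih, hyperKloosterman, pow_succ', Module.End.mul_apply]
    exact sum_mul_convEnd ((Units.coeHom ℂ).comp χ) _ _

lemma card_unitsHom : Fintype.card (Fˣ →* ℂˣ) = Fintype.card Fˣ := by
  have : NeZero (Monoid.exponent Fˣ) := ⟨Monoid.exponent_ne_zero_of_finite⟩
  simpa only [Nat.card_eq_fintype_card] using
    CommGroup.card_monoidHom_of_hasEnoughRootsOfUnity Fˣ ℂ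

lemma sum_unitsHom_apply (a : Fˣ) :
    ∑ χ : Fˣ →* ℂˣ, (χ a : ℂ) = if a = 1 then (Fintype.card Fˣ : ℂ) else 0 := by
  split_ifs with ha
  · simp [ha, card_unitsHom]
  · have : NeZero (Monoid.exponent Fˣ) := ⟨Monoid.exponent_ne_zero_of_finite⟩
    obtain ⟨χ₀, hχ₀⟩ := CommGroup.exists_apply_ne_one_of_hasEnoughRootsOfUnity Fˣ ℂ ha
    have hfix : (χ₀ a : ℂ) * ∑ χ : Fˣ →* ℂˣ, (χ a : ℂ) = ∑ χ : Fˣ →* ℂˣ, (χ a : ℂ) := by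
      rw [mul_sum]
      exact Fintype.sum_equiv (Equiv.mulLeft χ₀) _ _ fun χ ↦ by simp
    by_contra hsum
    exact hχ₀ (Units.ext ((mul_eq_right₀ hsum).mp hfix))

lemma sum_gaussSum'_pow (ψ : AddChar F ℂ) (n : ℕ) :
    ∑ χ, gaussSum' ψ χ ^ n = Fintype.card Fˣ * hyperKloosterman ψ n 1 := by
  simp_rw [← sum_mul_hyperKloosterman]
  rw [sum_comm]
  simp [← sum_mul, sum_unitsHom_apply]

lemma gaussSum'_eq_gaussSum (ψ : AddChar F ℂ) (χ : Fˣ →* ℂˣ) :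
    gaussSum' ψ χ = gaussSum (MulChar.ofUnitHom χ) ψ := by
  rw [gaussSum, ← sum_subset (subset_univ {x | x ≠ 0}) (by simp [MulChar.map_zero])]
  refine sum_nbij (fun x : Fˣ ↦ (x : F)) (by simp) Units.val_injective.injOn ?_ fun x _ ↦ ?_
  · exact fun x hx ↦ ⟨Units.mk0 x (by simpa using hx), by simp⟩
  · rw [MulChar.ofUnitHom_coe, mul_comm]

lemma gaussSum'_one (hψ : ψ ≠ 1) : gaussSum' ψ 1 = -1 := by
  rw [gaussSum'_eq_gaussSum, MulChar.ofUnitHom_eq, ← gaussSum_one_left hψ]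
  congr 1

lemma norm_gaussSum' (hψ : ψ ≠ 1) (hχ : χ ≠ 1) : ‖gaussSum' ψ χ‖ = √(Fintype.card F) := by
  have hχ' : MulChar.ofUnitHom χ ≠ 1 := fun h ↦ hχ <| by
    ext x
    simpa using congrArg (· (x : F)) h
  have hmul := gaussSum_mul_gaussSum_eq_card hχ' (AddChar.IsPrimitive.of_ne_one hψ)
  rw [← star_gaussSum_eq, ← gaussSum'_eq_gaussSum] at hmul
  have hsq : ‖gaussSum' ψ χ‖ ^ 2 = Fintype.card F := by
    exact_mod_cast (Complex.mul_conj' _).symm.trans hmul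
  rw [← hsq, Real.sqrt_sq (norm_nonneg _)]

/-- The Gauss sum scaled by `√q`, of absolute value `1` if both characters are nontrivial. -/
noncomputable def unitGaussSum (ψ : AddChar F ℂ) (χ : Fˣ →* ℂˣ) : ℂ :=
  gaussSum' ψ χ / (√(Fintype.card F) : ℝ)

lemma norm_unitGaussSum (hψ : ψ ≠ 1) (hχ : χ ≠ 1) : ‖unitGaussSum ψ χ‖ = 1 := by
  have hq : √(Fintype.card F : ℝ) ≠ 0 := by simp
  rw [unitGaussSum, norm_div, norm_gaussSum' hψ hχ, Complex.norm_of_nonneg (Real.sqrt_nonneg _),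
    div_self hq]

lemma norm_unitGaussSum_one_le (hψ : ψ ≠ 1) : ‖unitGaussSum ψ 1‖ ≤ 1 := by
  have hq : (1 : ℝ) ≤ Fintype.card F := mod_cast Fintype.card_pos
  rw [unitGaussSum, gaussSum'_one hψ, norm_div, norm_neg, norm_one,
    Complex.norm_of_nonneg (Real.sqrt_nonneg _)]
  exact div_le_one_of_le₀ (Real.one_le_sqrt.mpr hq) (Real.sqrt_nonneg _)

lemma sum_unitGaussSum_pow (ψ : AddChar F ℂ) (n : ℕ) :
    ∑ χ, unitGaussSum ψ χ ^ n =
      Fintype.card Fˣ * (hyperKloosterman ψ n 1 / (√(Fintype.card F) : ℝ) ^ n) := by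
  simp_rw [unitGaussSum, div_pow]
  rw [← sum_div, sum_gaussSum'_pow, mul_div_assoc]

lemma card_filter_unitsHom_ne_one :
    #{χ : Fˣ →* ℂˣ | χ ≠ 1} = Fintype.card Fˣ - 1 := by
  rw [filter_ne', card_erase_of_mem (mem_univ _), card_univ, card_unitsHom]

lemma norm_expect_unitGaussSum_pow_le (hψ : ψ ≠ 1) (hF : 2 ≤ Fintype.card Fˣ) (n : ℕ) :
    ‖𝔼 χ with χ ≠ 1, unitGaussSum ψ χ ^ n‖ ≤
      2 * (‖hyperKloosterman ψ n 1 / (√(Fintype.card F) : ℝ) ^ n‖ + 1 / Fintype.card Fˣ) := by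
  have hsum := sum_unitGaussSum_pow ψ n
  rw [← add_sum_erase _ _ (mem_univ 1), ← eq_sub_iff_add_eq', ← filter_ne'] at hsum
  have hN : (2 : ℝ) ≤ Fintype.card Fˣ := mod_cast hF
  rw [expect_eq_sum_div_card, hsum, card_filter_unitsHom_ne_one, norm_div, Complex.norm_natCast,
    Nat.cast_sub (by lia), Nat.cast_one]
  set N : ℝ := (Fintype.card Fˣ : ℝ)
  set κ := hyperKloosterman ψ n 1 / (√(Fintype.card F) : ℝ) ^ n
  have hnum : ‖Fintype.card Fˣ * κ - unitGaussSum ψ 1 ^ n‖ ≤ N * ‖κ‖ + 1 := by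
    refine (norm_sub_le _ _).trans ?_
    rw [norm_mul, norm_pow, Complex.norm_natCast]
    gcongr
    exact pow_le_one₀ (norm_nonneg _) (norm_unitGaussSum_one_le hψ)
  calc ‖Fintype.card Fˣ * κ - unitGaussSum ψ 1 ^ n‖ / (N - 1)
      ≤ (N * ‖κ‖ + 1) / (N / 2) := by gcongr; linarith
    _ = 2 * (‖κ‖ + 1 / N) := by field_simp

lemma norm_hyperKloosterman_div_pow_le {n : ℕ} (hψ : ψ ≠ 1) (hn : 0 < n) :
    ‖hyperKloosterman ψ n 1 / (√(Fintype.card F) : ℝ) ^ n‖ ^ (2 * (n + 1)) ≤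
      (2 * (n + 1)) ^ (n + 1) * (2 * n / Fintype.card Fˣ) := by
  have hq : (0 : ℝ) < Fintype.card F := mod_cast Fintype.card_pos
  rw [norm_div, norm_pow, Complex.norm_of_nonneg (Real.sqrt_nonneg _), pow_mul, div_pow,
    pow_right_comm, Real.sq_sqrt hq.le, div_pow, div_le_iff₀ (by positivity)]
  refine (norm_sq_hyperKloosterman_one_pow_le hψ hn).trans_eq ?_
  rw [mul_pow _ (_ ^ n)]
  ring

end GaussSumMoments

section Equidistribution

open Filter Topology
open scoped BigOperators

universe u

/-- A finite field with a nontrivial complex additive character: the index over which the angles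
are equidistributed. -/
structure NontrivialAddChar : Type (u + 1) where
  Carrier : Type u
  [field : Field Carrier]
  [fintype : Fintype Carrier]
  char : AddChar Carrier ℂ
  char_ne_one : char ≠ 1

namespace NontrivialAddChar

attribute [instance] field fintype

/-- The filter of neighbourhoods of `q = ∞`. -/
def cardAtTop : Filter NontrivialAddChar.{u} :=
  comap (fun ω ↦ Fintype.card ω.Carrier) atTop

lemma tendsto_card_units : Tendsto (fun ω ↦ Fintype.card ω.Carrierˣ) cardAtTop atTop := by
  simp only [Fintype.card_units]
  exact (tendsto_sub_atTop_nat 1).comp tendsto_comap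

lemma tendsto_norm_hyperKloosterman_div {n : ℕ} (hn : n ≠ 0) :
    Tendsto (fun ω ↦ ‖hyperKloosterman ω.char n 1 / (√(Fintype.card ω.Carrier) : ℝ) ^ n‖)
      cardAtTop (𝓝 0) := by
  have hbound : Tendsto (fun ω ↦ (2 * (n + 1) : ℝ) ^ (n + 1) * (2 * n / Fintype.card ω.Carrierˣ))
      cardAtTop (𝓝 0) := by
    simpa using ((tendsto_natCast_atTop_atTop.comp tendsto_card_units).const_div_atTop
      (2 * n : ℝ)).const_mul _
  have hpow := squeeze_zero (fun ω ↦ by positivity)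
    (fun ω ↦ norm_hyperKloosterman_div_pow_le ω.char_ne_one (Nat.pos_of_ne_zero hn)) hbound
  have hroot := hpow.rpow_const (p := ((2 * (n + 1) : ℕ) : ℝ)⁻¹) (Or.inr (by positivity))
  rw [Real.zero_rpow (by positivity)] at hroot
  exact hroot.congr fun ω ↦ Real.pow_rpow_inv_natCast (norm_nonneg _) (by positivity)

theorem tendsto_expect_unitGaussSum_pow {n : ℕ} (hn : n ≠ 0) :
    Tendsto (fun ω ↦ 𝔼 χ with χ ≠ 1, unitGaussSum ω.char χ ^ n) cardAtTop (𝓝 0) := by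
  have hinv : Tendsto (fun ω ↦ (1 : ℝ) / Fintype.card ω.Carrierˣ) cardAtTop (𝓝 0) :=
    (tendsto_natCast_atTop_atTop.comp tendsto_card_units).const_div_atTop 1
  have hbound := ((tendsto_norm_hyperKloosterman_div hn).add hinv).const_mul 2
  rw [add_zero, mul_zero] at hbound
  refine squeeze_zero_norm' ?_ hbound
  filter_upwards [tendsto_card_units.eventually_ge_atTop 2] with ω hω
  exact norm_expect_unitGaussSum_pow_le ω.char_ne_one hω n

theorem tendsto_expect_comp_unitGaussSum {f : ℂ → ℂ} (hf : ContinuousOn f (Metric.sphere 0 1)) :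
    Tendsto (fun ω ↦ 𝔼 χ with χ ≠ 1, f (unitGaussSum ω.char χ)) cardAtTop
      (𝓝 (Real.circleAverage f 0 1)) := by
  refine tendsto_expect_circleAverage ?_ (fun ω χ hχ ↦ ?_)
    (fun n hn ↦ tendsto_expect_unitGaussSum_pow hn) hf
  · filter_upwards [tendsto_card_units.eventually_ge_atTop 2] with ω hω
    rw [← card_pos, card_filter_unitsHom_ne_one]
    lia
  · exact norm_unitGaussSum ω.char_ne_one (mem_filter.mp hχ).2

end NontrivialAddChar

lemma expect_filter_ne_one {F : Type*} [Field F] [Fintype F] (hF : 2 ≤ Fintype.card F)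
    (g : (Fˣ →* ℂˣ) → ℂ) :
    𝔼 χ with χ ≠ 1, g χ = 1 / ((Fintype.card F : ℂ) - 2) * ∑ χ with χ ≠ 1, g χ := by
  rw [expect_eq_sum_div_card, card_filter_unitsHom_ne_one, Fintype.card_units, Nat.sub_sub,
    Nat.cast_sub hF, Nat.cast_ofNat, one_div_mul_eq_div]

lemma circleAverage_zero_one (f : ℂ → ℂ) :
    Real.circleAverage f 0 1 =
      1 / (2 * Real.pi) * ∫ θ in (0 : ℝ)..(2 * Real.pi), f (Complex.exp (θ * Complex.I)) := by
  simp [Real.circleAverage_def, circleMap]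

theorem gauss_sum_angles_equidistributed_general
    {f : ℂ → ℂ} (hf : ContinuousOn f (Metric.sphere 0 1)) {ε : ℝ} (hε : 0 < ε) :
    ∃ Q : ℕ, ∀ (F : Type u) [Field F] [Fintype F],
      Q ≤ Fintype.card F → 2 < Fintype.card F →
      ∀ ψ : AddChar F ℂ, ψ ≠ 1 →
      ‖(1 / ((Fintype.card F : ℂ) - 2)) *
          (∑ χ ∈ Finset.univ.filter (fun χ : Fˣ →* ℂˣ => χ ≠ 1),
            f (gaussSum' ψ χ / ((Real.sqrt (Fintype.card F) : ℝ) : ℂ))) -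
        (1 / (2 * (Real.pi : ℂ))) *
          ∫ θ in (0:ℝ)..(2 * Real.pi), f (Complex.exp (θ * Complex.I))‖ < ε := by
  have hclose := (NontrivialAddChar.tendsto_expect_comp_unitGaussSum.{u} hf).eventually
    (Metric.ball_mem_nhds _ hε)
  obtain ⟨Q, hQ⟩ := eventually_atTop.mp (eventually_comap.mp hclose)
  refine ⟨Q, fun F _ _ hF h2 ψ hψ ↦ ?_⟩
  have hdist := hQ _ hF ⟨F, ψ, hψ⟩ rfl
  rw [dist_eq_norm, expect_filter_ne_one h2.le, circleAverage_zero_one] at hdist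
  exact hdist

end Equidistribution

/-- **Equidistribution of Gauss sum angles (Deligne).** For every continuous `f : S¹ → ℂ`
and `ε > 0` there is `Q` such that for all finite fields `F` with `q ≥ Q` elements (`q > 2`)
and every nontrivial additive character `ψ`, the average of `f (g(ψ,χ)/√q)` over nontrivial
multiplicative characters `χ` is within `ε` of `(1/2π) ∫₀^{2π} f(e^{iθ}) dθ`. -/
theorem gauss_sum_angles_equidistributed
    (f : ℂ → ℂ) (hf : Continuous f) (ε : ℝ) (hε : 0 < ε) :
    ∃ Q : ℕ, ∀ (F : Type) [Field F] [Fintype F],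
      Q ≤ Fintype.card F → 2 < Fintype.card F →
      ∀ ψ : AddChar F ℂ, ψ ≠ 1 →
      ‖(1 / ((Fintype.card F : ℂ) - 2)) *
          (∑ χ ∈ Finset.univ.filter (fun χ : Fˣ →* ℂˣ => χ ≠ 1),
            f (gaussSum' ψ χ / ((Real.sqrt (Fintype.card F) : ℝ) : ℂ))) -
        (1 / (2 * (Real.pi : ℂ))) *
          ∫ θ in (0:ℝ)..(2 * Real.pi), f (Complex.exp (θ * Complex.I))‖ < ε :=
  gauss_sum_angles_equidistributed_general hf.continuousOn hε
end

section
/- Weil's bound for Kloosterman sums: For every finite field F_q with q elements, every nontrivial additive character ψ : (F_q,+) → ℂˣ and every a ∈ F_q^×, one has |Kl_2(a, q)| ≤ 2√q. -/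
open Finset
open scoped Classical

/-- The Kloosterman sum `Kl_2(a, q) = ∑_{x ∈ F_q^×} ψ(x + a x⁻¹)`. -/
noncomputable def Kl2 {F : Type*} [Field F] [Fintype F]
    (ψ : AddChar F ℂ) (a : Fˣ) : ℂ :=
  ∑ x : Fˣ, ψ ((x : F) + (a : F) * (x : F)⁻¹)

/-!
The weight `f ↦ ψ (∑ x, x + a * ∑ x, x⁻¹)`, with `x` running over the roots of the monic polynomial
`f`, is completely multiplicative, and it averages to `0` over the monic polynomials of each degree
`≥ 3`. Its `L`-function is therefore the polynomial
`1 + Kl * T + q * T ^ 2 = (1 - α * T) * (1 - β * T)`.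
Comparing coefficients in the logarithmic derivative of the Euler product shows that the Kloosterman
sum over the extension of degree `n` is `-(α ^ n + β ^ n)`.

Over an extension of even degree `2 * (k + 1)`, Stepanov's method bounds the number of points where
the trace of `x + a / x` takes a given value by `q ^ (2 * k + 1) + 3 * q ^ (k + 1)`. The main terms
cancel in the Kloosterman sum because `ψ` sums to `0`, whence
`α ^ (2 * (k + 1)) + β ^ (2 * (k + 1)) = O(q ^ (k + 1))`. Letting `k` grow, this and `α * β = q`
give `|α|, |β| ≤ √q`.
-/

namespace Kloosterman

open Polynomial

/-! ### Stepanov's method -/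

lemma linearIndependent_of_natDegree_injective {R ι : Type*} [Ring R] [IsDomain R]
    {E : ι → R[X]} (hE₀ : ∀ t, E t ≠ 0) (hE : Function.Injective fun t ↦ (E t).natDegree) :
    LinearIndependent R E := by
  refine linearIndependent_iff'.2 fun s c hc t ht ↦ ?_
  have hdisj : Set.Pairwise {i | i ∈ s ∧ c i • E i ≠ 0}
      (Function.onFun (· ≠ ·) (degree ∘ fun i ↦ c i • E i)) := by
    rintro i ⟨-, hi⟩ j ⟨-, hj⟩ hij hdeg
    have hnat : (c i • E i).natDegree = (c j • E j).natDegree := natDegree_eq_of_degree_eq hdeg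
    rw [natDegree_smul _ (left_ne_zero_of_smul hi), natDegree_smul _ (left_ne_zero_of_smul hj)]
      at hnat
    exact hij (hE hnat)
  have hsup := degree_sum_eq_of_disjoint _ s hdisj
  rw [hc, degree_zero, eq_comm, Finset.sup_eq_bot_iff] at hsup
  exact (smul_eq_zero.1 (degree_eq_bot.1 (hsup t ht))).resolve_right (hE₀ t)

lemma exists_sum_smul_eq_zero_of_natDegree_le {F ι : Type*} [Field F] [Fintype ι]
    {H : ι → F[X]} {n : ℕ} (hH : ∀ t, (H t).natDegree ≤ n) (hn : n + 1 < Fintype.card ι) :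
    ∃ c : ι → F, ∑ t, c t • H t = 0 ∧ ∃ t, c t ≠ 0 := by
  let H' : ι → degreeLT F (n + 1) := fun t ↦
    ⟨H t, mem_degreeLT.2 (degree_le_natDegree.trans_lt
      (by exact_mod_cast Nat.lt_succ_of_le (hH t)))⟩
  have hdep : ¬LinearIndependent F H' := fun h ↦ by
    have hcard := h.fintype_card_le_finrank
    rw [(degreeLTEquiv F (n + 1)).finrank_eq, Module.finrank_fin_fun] at hcard
    omega
  obtain ⟨c, hc, hne⟩ := Fintype.not_linearIndependent_iff.1 hdep
  exact ⟨c, by simpa [H'] using congrArg Subtype.val hc, hne⟩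

section Stepanov

variable {F : Type*} [Field F]

section Frobenius

variable [Fintype F]

lemma frobeniusAlgHom_pow_apply {A : Type*} [CommRing A] [Algebra F A] (n : ℕ) (x : A) :
    (FiniteField.frobeniusAlgHom F A ^ n) x = x ^ Fintype.card F ^ n := by
  rw [AlgHom.coe_pow, FiniteField.coe_frobeniusAlgHom, pow_iterate]

/- As `H` has more members than its degrees allow, `∑ c t • H t = 0` for some `c ≠ 0`. Raising to
the power `q ^ e` is `F`-linear, so `∑ c t • E t ≠ 0` vanishes on `S` although its degree can be
much smaller than that of its `q ^ e`-th power. -/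
lemma card_le_of_aeval_pow_eq {K ι : Type*} [CommRing K] [IsDomain K] [Algebra F K] [Fintype ι]
    {E H : ι → F[X]} {D n e : ℕ} (hE : LinearIndependent F E) (hED : ∀ t, (E t).natDegree ≤ D)
    (hH : ∀ t, (H t).natDegree ≤ n) (hn : n + 1 < Fintype.card ι) {S : Finset K}
    (hS : ∀ x ∈ S, ∃ u, ∀ t, aeval x (E t) ^ Fintype.card F ^ e = u * aeval x (H t)) :
    #S ≤ D := by
  obtain ⟨c, hcH, t₀, ht₀⟩ := exists_sum_smul_eq_zero_of_natDegree_le hH hn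
  set G : F[X] := ∑ t, c t • E t with hG
  have hG₀ : G ≠ 0 := fun h ↦ ht₀ (Fintype.linearIndependent_iff.1 hE c h t₀)
  have hGD : G.natDegree ≤ D :=
    natDegree_sum_le_of_forall_le _ _ fun t _ ↦ (natDegree_smul_le _ _).trans (hED t)
  have hvanish : ∀ x ∈ S, aeval x G = 0 := by
    intro x hx
    obtain ⟨u, hu⟩ := hS x hx
    suffices aeval x G ^ Fintype.card F ^ e = u * aeval x (∑ t, c t • H t) by
      rw [hcH, map_zero, mul_zero] at this
      exact eq_zero_of_pow_eq_zero this
    simp only [← frobeniusAlgHom_pow_apply (F := F)] at hu ⊢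
    simp only [hG, map_sum, map_smul, hu, mul_sum, mul_smul_comm]
  have hroots : S.val ⊆ (G.map (algebraMap F K)).roots := fun x hx ↦ by
    rw [mem_roots ((Polynomial.map_ne_zero_iff (FaithfulSMul.algebraMap_injective F K)).2 hG₀),
      IsRoot, eval_map_algebraMap]
    exact hvanish x hx
  exact (card_le_degree_of_subset_roots hroots).trans (natDegree_map_le.trans hGD)

end Frobenius

section AuxiliaryPolynomials

/-- Stepanov's auxiliary polynomials attached to `B`; in the application `B` has degree `2 * m` and
the indices run over `l < m`, `j < q` and `i < m + 2`. The factor `X ^ (m * (q - 1 - j))` makes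
the degrees pairwise distinct: `l + m * j + m * q * i` is written in mixed radix. -/
noncomputable def stepanovPoly (B : F[X]) (q m l j i : ℕ) : F[X] :=
  X ^ (l + m * q * i + m * (q - 1 - j)) * B ^ j

/-- What becomes of `stepanovPoly B q m l j i ^ (m * q)`, up to a factor independent of the
indices, at the points `x = x ^ (m * q) ^ 2` where `B = X ^ m * A` with `A ^ (m * q) = b - A`. -/
noncomputable def stepanovPowPoly (B : F[X]) (b : F) (q m l j i : ℕ) : F[X] :=
  X ^ (m * q * l + i + m * (q - 1 - j)) * (C b * X ^ m - B) ^ j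

variable {B : F[X]} {q m : ℕ}

lemma natDegree_stepanovPoly (hB₀ : B ≠ 0) (hB : B.natDegree = 2 * m) {j : ℕ} (hj : j < q)
    (l i : ℕ) :
    (stepanovPoly B q m l j i).natDegree = l + m * (j + q * i) + m * (q - 1) := by
  obtain ⟨u, rfl⟩ := Nat.exists_eq_add_of_lt hj
  rw [stepanovPoly, natDegree_mul (pow_ne_zero _ X_ne_zero) (pow_ne_zero _ hB₀), natDegree_X_pow,
    natDegree_pow, hB, show j + u + 1 - 1 - j = u by omega, Nat.add_sub_cancel]
  ring

lemma natDegree_stepanovPowPoly_le (hB : B.natDegree = 2 * m) (b : F) {l j i : ℕ}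
    (hl : l < m) (hj : j < q) (hi : i < m + 2) :
    (stepanovPowPoly B b q m l j i).natDegree ≤ m * q * (m + 1) := by
  have hsub : (C b * X ^ m - B).natDegree ≤ 2 * m :=
    (natDegree_sub_le _ _).trans
      (max_le ((natDegree_C_mul_X_pow_le _ _).trans (by omega)) hB.le)
  have hdeg : (stepanovPowPoly B b q m l j i).natDegree ≤
      m * q * l + i + m * (q - 1 - j) + j * (2 * m) :=
    natDegree_mul_le.trans (add_le_add (natDegree_X_pow _).le
      (natDegree_pow_le.trans (Nat.mul_le_mul_left _ hsub)))
  obtain ⟨u, rfl⟩ := Nat.exists_eq_add_of_lt hj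
  obtain ⟨v, rfl⟩ := Nat.exists_eq_add_of_lt hl
  rw [show j + u + 1 - 1 - j = u by omega] at hdeg
  refine hdeg.trans ?_
  nlinarith [Nat.zero_le (v * (j + u) * (l + v)), Nat.zero_le (v * (j + u)), Nat.zero_le (l * u),
    Nat.zero_le (v * u), Nat.zero_le (v * v), Nat.zero_le (l * v)]

lemma aeval_stepanovPoly_pow {K : Type*} [CommRing K] [Algebra F K] {b : F} {x A : K}
    (hx : x ^ (m * q) ^ 2 = x) (hB : aeval x B = x ^ m * A)
    (hA : A ^ (m * q) = algebraMap F K b - A) {j : ℕ} (hj : j < q) (l i : ℕ) :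
    aeval x (stepanovPoly B q m l j i) ^ (m * q) =
      x ^ (m * (q - 1) * (m * q - 1)) * aeval x (stepanovPowPoly B b q m l j i) := by
  have hBpow : algebraMap F K b * x ^ m - x ^ m * A = x ^ m * A ^ (m * q) := by rw [hA]; ring
  simp only [stepanovPoly, stepanovPowPoly, map_mul, map_pow, map_sub, aeval_X, aeval_C, hB, hBpow]
  have hexp : m * (q - 1) * (m * q - 1) + m * (q - 1 - j) + m * j = m * (q - 1) * (m * q) := by
    rw [add_assoc, ← Nat.mul_add, Nat.sub_add_cancel (Nat.le_sub_one_of_lt hj)]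
    rcases m.eq_zero_or_pos with rfl | hm
    · simp
    · rw [← Nat.mul_succ, Nat.succ_eq_add_one, Nat.sub_add_cancel (Nat.mul_pos hm (by omega))]
  have hsplit : q - 1 = q - 1 - j + j := by omega
  calc (x ^ (l + m * q * i + m * (q - 1 - j)) * (x ^ m * A) ^ j) ^ (m * q)
      = x ^ (m * (q - 1 - j + j) * (m * q)) * x ^ (m * q * l) * (x ^ (m * q) ^ 2) ^ i
          * (A ^ (m * q)) ^ j := by ring
    _ = x ^ (m * (q - 1) * (m * q - 1)) * (x ^ (m * q * l + i + m * (q - 1 - j))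
          * (x ^ m * A ^ (m * q)) ^ j) := by rw [← hsplit, ← hexp, hx]; ring

lemma add_mul_eq_add_mul_iff_of_lt {m l l' a a' : ℕ} (hl : l < m) (hl' : l' < m) :
    l + m * a = l' + m * a' ↔ l = l' ∧ a = a' := by
  refine ⟨fun h ↦ ?_, by rintro ⟨rfl, rfl⟩; rfl⟩
  have hmod := congrArg (· % m) h
  simp only [Nat.add_mul_mod_self_left, Nat.mod_eq_of_lt, hl, hl'] at hmod
  exact ⟨hmod, by simpa [hmod, (Nat.zero_le l).trans_lt hl |>.ne'] using h⟩

lemma natDegree_stepanovPoly_injective (hB₀ : B ≠ 0) (hB : B.natDegree = 2 * m) (n : ℕ) :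
    Function.Injective fun t : Fin m × Fin q × Fin n ↦
      (stepanovPoly B q m t.1 t.2.1 t.2.2).natDegree := by
  rintro ⟨l, j, i⟩ ⟨l', j', i'⟩ h
  simp only [natDegree_stepanovPoly hB₀ hB (Fin.is_lt _), add_left_inj,
    add_mul_eq_add_mul_iff_of_lt (Fin.is_lt _) (Fin.is_lt _), Fin.val_inj] at h
  simpa only [Prod.mk.injEq] using h

lemma stepanovPoly_ne_zero (hB₀ : B ≠ 0) (q m l j i : ℕ) : stepanovPoly B q m l j i ≠ 0 :=
  mul_ne_zero (pow_ne_zero _ X_ne_zero) (pow_ne_zero _ hB₀)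

end AuxiliaryPolynomials

section TracePoints

variable [Fintype F] {K : Type*} [Field K] [Algebra F K]

lemma card_le_of_aeval_eq_pow_mul {B : F[X]} {q m e : ℕ} (hq : 2 ≤ q)
    (hqm : m * q = Fintype.card F ^ e) (hB : B.natDegree = 2 * m) (b : F) {S : Finset K}
    (hS : ∀ x ∈ S, x ^ (m * q) ^ 2 = x ∧
      ∃ A, aeval x B = x ^ m * A ∧ A ^ (m * q) = algebraMap F K b - A) :
    #S ≤ m * q * (m + 3) := by
  have hm : 0 < m := Nat.pos_of_mul_pos_right (hqm ▸ pow_pos Fintype.card_pos e : 0 < m * q)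
  have hB₀ : B ≠ 0 := by rintro rfl; rw [natDegree_zero] at hB; omega
  refine card_le_of_aeval_pow_eq (ι := Fin m × Fin q × Fin (m + 2)) (e := e)
    (linearIndependent_of_natDegree_injective
      (fun t ↦ stepanovPoly_ne_zero hB₀ q m t.1 t.2.1 t.2.2)
      (natDegree_stepanovPoly_injective hB₀ hB (m + 2)))
    (H := fun t ↦ stepanovPowPoly B b q m t.1 t.2.1 t.2.2) (n := m * q * (m + 1)) ?_ ?_ ?_ ?_
  · rintro ⟨⟨l, hl⟩, ⟨j, hj⟩, ⟨i, hi⟩⟩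
    rw [natDegree_stepanovPoly hB₀ hB hj]
    have hi' : q * i ≤ q * (m + 1) := Nat.mul_le_mul_left q (by omega)
    calc l + m * (j + q * i) + m * (q - 1)
        ≤ m + m * (q - 1 + q * (m + 1)) + m * (q - 1) := by gcongr; omega
      _ = m * (q - 1 + 1 + q * (m + 1) + (q - 1)) := by ring
      _ ≤ m * (q * (m + 3)) := Nat.mul_le_mul_left m (by rw [Nat.mul_add, Nat.mul_add]; omega)
      _ = m * q * (m + 3) := (mul_assoc _ _ _).symm
  · exact fun t ↦ natDegree_stepanovPowPoly_le hB b t.1.2 t.2.1.2 t.2.2.2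
  · simp only [Fintype.card_prod, Fintype.card_fin]
    nlinarith
  · intro x hx
    obtain ⟨hxq, A, hBA, hA⟩ := hS x hx
    exact ⟨_, fun t ↦ hqm ▸ aeval_stepanovPoly_pow hxq hBA hA t.2.1.2 _ _⟩

/-- The polynomial `X ^ q ^ k * ∑ i ≤ k, (X + a / X) ^ q ^ i`. When `K` has degree `2 * (k + 1)`
over `F`, the sum is the first half of the trace of `X + a / X`, and its `q ^ (k + 1)`-th power is
the second half. -/
noncomputable def halfTracePoly (a : F) (k : ℕ) : F[X] :=
  ∑ i ∈ range (k + 1), (X ^ (Fintype.card F ^ k + Fintype.card F ^ i)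
    + C a * X ^ (Fintype.card F ^ k - Fintype.card F ^ i))

lemma natDegree_halfTracePoly (a : F) (k : ℕ) :
    (halfTracePoly a k).natDegree = 2 * Fintype.card F ^ k := by
  have hpos : 0 < Fintype.card F ^ k := pow_pos Fintype.card_pos k
  have hlast : (X ^ (2 * Fintype.card F ^ k) + C a : F[X]).natDegree = 2 * Fintype.card F ^ k :=
    natDegree_X_pow_add_C
  have hrest : (∑ i ∈ range k, (X ^ (Fintype.card F ^ k + Fintype.card F ^ i)
      + C a * X ^ (Fintype.card F ^ k - Fintype.card F ^ i))).natDegree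
        ≤ 2 * Fintype.card F ^ k - 1 := by
    refine natDegree_sum_le_of_forall_le _ _ fun i hi ↦ natDegree_add_le_of_degree_le ?_ ?_
    · have : Fintype.card F ^ i < Fintype.card F ^ k :=
        Nat.pow_lt_pow_right Fintype.one_lt_card (mem_range.1 hi)
      rw [natDegree_X_pow]
      omega
    · exact (natDegree_C_mul_X_pow_le _ _).trans (by omega)
  rw [halfTracePoly, sum_range_succ, ← two_mul, Nat.sub_self, pow_zero, mul_one,
    natDegree_add_eq_right_of_natDegree_lt (by omega), hlast]

lemma aeval_halfTracePoly (a : F) (k : ℕ) {x : K} (hx : x ≠ 0) :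
    aeval x (halfTracePoly a k) = x ^ Fintype.card F ^ k *
      ∑ i ∈ range (k + 1), (x + algebraMap F K a * x⁻¹) ^ Fintype.card F ^ i := by
  rw [halfTracePoly, map_sum, mul_sum]
  refine sum_congr rfl fun i hi ↦ ?_
  have hle : Fintype.card F ^ i ≤ Fintype.card F ^ k :=
    Nat.pow_le_pow_right Fintype.card_pos (mem_range_succ_iff.1 hi)
  have hpow : (x + algebraMap F K a * x⁻¹) ^ Fintype.card F ^ i =
      x ^ Fintype.card F ^ i + algebraMap F K a * (x ^ Fintype.card F ^ i)⁻¹ := by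
    simp only [← frobeniusAlgHom_pow_apply (F := F), map_add, map_mul, map_inv₀, AlgHom.commutes]
  simp only [map_add, map_mul, map_pow, aeval_X, aeval_C, hpow, pow_add, pow_sub₀ x hx hle]
  ring

lemma sum_pow_card_pow_eq_trace_sub [Finite K] {k : ℕ} (hK : Module.finrank F K = 2 * (k + 1))
    (y : K) :
    (∑ i ∈ range (k + 1), y ^ Fintype.card F ^ i) ^ Fintype.card F ^ (k + 1) =
      algebraMap F K (Algebra.trace F K y) - ∑ i ∈ range (k + 1), y ^ Fintype.card F ^ i := by
  rw [eq_sub_iff_add_eq', FiniteField.algebraMap_trace_eq_sum_pow, hK, two_mul,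
    sum_range_add _ (k + 1) (k + 1), Nat.card_eq_fintype_card, ← frobeniusAlgHom_pow_apply, map_sum]
  simp only [frobeniusAlgHom_pow_apply, ← pow_mul, ← pow_add, add_comm]

theorem card_trace_add_mul_inv_eq_le [Fintype K] {k : ℕ}
    (hK : Module.finrank F K = 2 * (k + 1)) (a b : F) :
    #{x : Kˣ | Algebra.trace F K (x + algebraMap F K a * (x : K)⁻¹) = b} ≤
      Fintype.card F ^ (2 * k + 1) + 3 * Fintype.card F ^ (k + 1) := by
  have hcard : Fintype.card F ^ k * Fintype.card F = Fintype.card F ^ (k + 1) := rfl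
  rw [← card_image_of_injective _ Units.val_injective]
  refine (card_le_of_aeval_eq_pow_mul Fintype.one_lt_card hcard (natDegree_halfTracePoly a k) b
    ?_).trans_eq (by ring)
  simp only [mem_image, mem_filter, mem_univ, true_and, hcard]
  rintro _ ⟨x, rfl, rfl⟩
  refine ⟨?_, _, aeval_halfTracePoly a k x.ne_zero, sum_pow_card_pow_eq_trace_sub hK _⟩
  rw [← pow_mul, mul_comm, ← hK, ← Module.card_eq_pow_finrank, FiniteField.pow_card]

end TracePoints

end Stepanov

/-! ### Multiplicative functions of monic polynomials -/

section VonMangoldt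

variable {F : Type*} [Field F]

open UniqueFactorizationMonoid

lemma monic_of_mem_normalizedFactors {f P : F[X]} (hP : P ∈ normalizedFactors f) : P.Monic :=
  normalize_normalized_factor P hP ▸ monic_normalize (irreducible_of_normalized_factor P hP).ne_zero

lemma natDegree_eq_sum_count_normalizedFactors {f : F[X]} (hf : f.Monic) :
    f.natDegree = ∑ P ∈ (normalizedFactors f).toFinset,
      (normalizedFactors f).count P * P.natDegree := by
  conv_lhs => rw [← hf.normalize_eq_self, ← prod_normalizedFactors_eq hf.ne_zero,
    natDegree_multiset_prod_of_monic _ fun P hP ↦ monic_of_mem_normalizedFactors hP,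
    Finset.sum_multiset_map_count]
  simp only [smul_eq_mul]

/-- The pairs of a monic irreducible polynomial `P` and an exponent `e ≠ 0` with `P ^ e ∣ f`. -/
noncomputable def primePowDivisors (f : F[X]) : Finset (Σ _ : F[X], ℕ) :=
  (normalizedFactors f).toFinset.sigma fun P ↦ Icc 1 ((normalizedFactors f).count P)

lemma mem_primePowDivisors {f P : F[X]} (hf : f ≠ 0) {e : ℕ} :
    ⟨P, e⟩ ∈ primePowDivisors f ↔ P.Monic ∧ Irreducible P ∧ e ≠ 0 ∧ P ^ e ∣ f := by
  have hdvd : P.Monic → Irreducible P → (P ^ e ∣ f ↔ e ≤ (normalizedFactors f).count P) :=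
    fun hP hirr ↦ by
      rw [pow_dvd_iff_le_emultiplicity, emultiplicity_eq_count_normalizedFactors hirr hf,
        hP.normalize_eq_self, Nat.cast_le]
  rw [primePowDivisors, mem_sigma, Multiset.mem_toFinset, mem_Icc]
  constructor
  · rintro ⟨hmem, he, hle⟩
    have hP := monic_of_mem_normalizedFactors hmem
    have hirr := irreducible_of_normalized_factor P hmem
    exact ⟨hP, hirr, Nat.one_le_iff_ne_zero.1 he, (hdvd hP hirr).2 hle⟩
  · rintro ⟨hP, hirr, he, hle⟩
    rw [hdvd hP hirr] at hle
    have he : 1 ≤ e := Nat.one_le_iff_ne_zero.2 he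
    exact ⟨Multiset.count_pos.1 (he.trans hle), he, hle⟩

lemma sum_primePowDivisors_natDegree {f : F[X]} (hf : f.Monic) :
    ∑ t ∈ primePowDivisors f, t.1.natDegree = f.natDegree := by
  simp only [natDegree_eq_sum_count_normalizedFactors hf, primePowDivisors, sum_sigma, sum_const,
    Nat.card_Icc, Nat.add_sub_cancel, smul_eq_mul]

lemma exists_eq_pow_of_monic_of_isPrimePow {g : F[X]} (hg : g.Monic) (hg' : IsPrimePow g) :
    ∃ P e, P.Monic ∧ Irreducible P ∧ e ≠ 0 ∧ P ^ e = g := by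
  obtain ⟨p, e, hp, he, rfl⟩ := hg'
  have hassoc : Associated (normalize p) p := normalize_associated p
  have hp' : (normalize p).Monic := monic_normalize hp.ne_zero
  exact ⟨normalize p, e, hp', hassoc.symm.irreducible hp.irreducible, he.ne',
    eq_of_monic_of_associated (hp'.pow e) hg hassoc.pow_pow⟩

lemma radical_pow_of_monic {P : F[X]} (hP : P.Monic) (hP' : Irreducible P) {e : ℕ} (he : e ≠ 0) :
    radical (P ^ e) = P := by
  rw [radical_pow_of_prime hP'.prime he, hP.normalize_eq_self]

lemma eq_and_eq_of_pow_eq_pow {P P' : F[X]} (hP : P.Monic) (hirr : Irreducible P)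
    (hP' : P'.Monic) (hirr' : Irreducible P') {e e' : ℕ} (he : e ≠ 0) (he' : e' ≠ 0)
    (h : P ^ e = P' ^ e') : P = P' ∧ e = e' := by
  obtain rfl : P = P' := by
    rw [← radical_pow_of_monic hP hirr he, h, radical_pow_of_monic hP' hirr' he']
  have hdeg := congrArg natDegree h
  rw [natDegree_pow, natDegree_pow] at hdeg
  exact ⟨rfl, Nat.eq_of_mul_eq_mul_right hirr.natDegree_pos hdeg⟩

/-- The von Mangoldt function of `F[X]`: the degree of `P` at the powers of a prime `P`, and `0`
elsewhere. -/
noncomputable def vonMangoldt (g : F[X]) : ℕ :=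
  if IsPrimePow g then (radical g).natDegree else 0

lemma vonMangoldt_pow {P : F[X]} (hP : P.Monic) (hP' : Irreducible P) {e : ℕ} (he : e ≠ 0) :
    vonMangoldt (P ^ e) = P.natDegree := by
  rw [vonMangoldt, if_pos (hP'.prime.isPrimePow.pow he), radical_pow_of_monic hP hP' he]

lemma sum_vonMangoldt_eq_natDegree {f : F[X]} (hf : f.Monic) {s : Finset F[X]}
    (hs : ∀ g, g ∈ s ↔ g.Monic ∧ g ∣ f) : ∑ g ∈ s, vonMangoldt g = f.natDegree := by
  rw [← sum_primePowDivisors_natDegree hf]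
  refine (sum_of_injOn (fun t ↦ t.1 ^ t.2) ?_ ?_ ?_ ?_).symm
  · rintro ⟨P, e⟩ ht ⟨P', e'⟩ ht' h
    obtain ⟨hP, hirr, he, -⟩ := (mem_primePowDivisors hf.ne_zero).1 ht
    obtain ⟨hP', hirr', he', -⟩ := (mem_primePowDivisors hf.ne_zero).1 ht'
    obtain ⟨rfl, rfl⟩ := eq_and_eq_of_pow_eq_pow hP hirr hP' hirr' he he' h
    rfl
  · rintro ⟨P, e⟩ ht
    obtain ⟨hP, -, -, hdvd⟩ := (mem_primePowDivisors hf.ne_zero).1 ht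
    exact (hs _).2 ⟨hP.pow e, hdvd⟩
  · intro g hg hnot
    obtain ⟨hg, hgf⟩ := (hs g).1 hg
    refine if_neg fun hpow ↦ hnot ?_
    obtain ⟨P, e, hP, hirr, he, rfl⟩ := exists_eq_pow_of_monic_of_isPrimePow hg hpow
    exact ⟨⟨P, e⟩, (mem_primePowDivisors hf.ne_zero).2 ⟨hP, hirr, he, hgf⟩, rfl⟩
  · rintro ⟨P, e⟩ ht
    obtain ⟨hP, hirr, he, -⟩ := (mem_primePowDivisors hf.ne_zero).1 ht
    exact (vonMangoldt_pow hP hirr he).symm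

end VonMangoldt

section MonicSums

variable {F : Type*} [Field F] [Finite F]

lemma finite_setOf_monic_natDegree_eq (d : ℕ) : {f : F[X] | f.Monic ∧ f.natDegree = d}.Finite := by
  have : Finite (degreeLT F d) := Finite.of_equiv _ (degreeLTEquiv F d).toEquiv.symm
  exact Set.finite_coe_iff.1 (Finite.of_equiv _ (monicEquivDegreeLT d).symm)

variable (F) in
/-- The monic polynomials of degree `d` over a finite field. -/
noncomputable def monicOfDegree (d : ℕ) : Finset F[X] :=
  (finite_setOf_monic_natDegree_eq d).toFinset

lemma mem_monicOfDegree {d : ℕ} {f : F[X]} :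
    f ∈ monicOfDegree F d ↔ f.Monic ∧ f.natDegree = d :=
  Set.Finite.mem_toFinset _

lemma monicOfDegree_zero : monicOfDegree F 0 = {1} := by
  ext f
  rw [mem_monicOfDegree, mem_singleton]
  exact ⟨fun h ↦ h.1.natDegree_eq_zero.1 h.2, by rintro rfl; exact ⟨monic_one, natDegree_one⟩⟩

lemma add_C_mul_X_pow_mem_monicOfDegree {d i : ℕ} (hi : i < d) {f : F[X]}
    (hf : f ∈ monicOfDegree F d) (c : F) : f + C c * X ^ i ∈ monicOfDegree F d := by
  rw [mem_monicOfDegree] at hf ⊢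
  have hlt : (C c * X ^ i).degree < f.degree := by
    rw [degree_eq_natDegree hf.1.ne_zero, hf.2]
    exact (degree_C_mul_X_pow_le i c).trans_lt (by exact_mod_cast hi)
  exact ⟨hf.1.add_of_left hlt, by rw [natDegree_add_eq_left_of_degree_lt hlt, hf.2]⟩

lemma sum_antidiagonal_vonMangoldt {f : F[X]} (hf : f.Monic) :
    ∑ p ∈ antidiagonal f.natDegree, ∑ g ∈ monicOfDegree F p.1 with g ∣ f, vonMangoldt g =
      f.natDegree := by
  rw [← sum_biUnion]
  · refine sum_vonMangoldt_eq_natDegree hf fun g ↦ ?_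
    simp only [mem_biUnion, mem_filter, mem_monicOfDegree,
      HasAntidiagonal.mem_antidiagonal]
    refine ⟨?_, fun ⟨hg, hgf⟩ ↦ ⟨(g.natDegree, f.natDegree - g.natDegree),
      Nat.add_sub_cancel' (natDegree_le_of_dvd hgf hf.ne_zero), ⟨hg, rfl⟩, hgf⟩⟩
    rintro ⟨p, -, ⟨hg, -⟩, hgf⟩
    exact ⟨hg, hgf⟩
  · intro p hp p' hp' hne
    refine disjoint_left.2 fun g hg hg' ↦ hne ?_
    rw [mem_filter, mem_monicOfDegree] at hg hg'
    exact HasAntidiagonal.antidiagonal_congr hp hp' |>.2 (hg.1.2.symm.trans hg'.1.2)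

variable {R : Type*} [CommSemiring R] (χ : F[X] →* R)

/-- The sum of `χ` over the monic polynomials of degree `d`: the `d`-th coefficient of the
`L`-function `∑ f, χ f * T ^ deg f` of `χ`. -/
noncomputable def monicSum (d : ℕ) : R :=
  ∑ f ∈ monicOfDegree F d, χ f

/-- The sum of `χ` over the prime powers of degree `d`, weighted by `vonMangoldt`: the `d`-th
coefficient of `T * L'(T) / L(T)`, for `L` the `L`-function of `χ`. -/
noncomputable def mangoldtSum (d : ℕ) : R :=
  ∑ g ∈ monicOfDegree F d, vonMangoldt g * χ g

lemma monicSum_zero : monicSum χ 0 = 1 := by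
  rw [monicSum, monicOfDegree_zero, sum_singleton, map_one]

lemma sum_monicOfDegree_dvd {r : ℕ} {g : F[X]} (hg : g ∈ monicOfDegree F r) (s : ℕ) :
    ∑ f ∈ monicOfDegree F (r + s) with g ∣ f, χ f = χ g * monicSum χ s := by
  rw [mem_monicOfDegree] at hg
  obtain ⟨hg, rfl⟩ := hg
  have himage : {f ∈ monicOfDegree F (g.natDegree + s) | g ∣ f} =
      (monicOfDegree F s).image (g * ·) := by
    ext f
    simp only [mem_filter, mem_image, mem_monicOfDegree]
    constructor
    · rintro ⟨⟨hf, hdeg⟩, h, rfl⟩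
      have hh := hg.of_mul_monic_left hf
      exact ⟨h, ⟨hh, by rwa [hg.natDegree_mul hh, add_right_inj] at hdeg⟩, rfl⟩
    · rintro ⟨h, ⟨hh, rfl⟩, rfl⟩
      exact ⟨⟨hg.mul hh, hg.natDegree_mul hh⟩, dvd_mul_right g h⟩
  rw [himage, sum_image (mul_right_injective₀ hg.ne_zero).injOn, monicSum, mul_sum]
  simp only [map_mul]

theorem natCast_mul_monicSum (d : ℕ) :
    d * monicSum χ d = ∑ p ∈ antidiagonal d, mangoldtSum χ p.1 * monicSum χ p.2 := by
  calc d * monicSum χ d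
      = ∑ f ∈ monicOfDegree F d, ∑ p ∈ antidiagonal d, ∑ g ∈ monicOfDegree F p.1,
          if g ∣ f then vonMangoldt g * χ f else 0 := by
        rw [monicSum, mul_sum]
        refine sum_congr rfl fun f hf ↦ ?_
        obtain ⟨hmonic, rfl⟩ := mem_monicOfDegree.1 hf
        conv_lhs => rw [← sum_antidiagonal_vonMangoldt hmonic]
        simp only [Nat.cast_sum, Nat.cast_ite, Nat.cast_zero, sum_mul, ite_mul, zero_mul,
          sum_filter]
    _ = ∑ p ∈ antidiagonal d, ∑ g ∈ monicOfDegree F p.1,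
          vonMangoldt g * ∑ f ∈ monicOfDegree F d with g ∣ f, χ f := by
        rw [sum_comm]
        refine sum_congr rfl fun p _ ↦ ?_
        rw [sum_comm]
        simp only [mul_sum, sum_filter, mul_ite, mul_zero]
    _ = ∑ p ∈ antidiagonal d, mangoldtSum χ p.1 * monicSum χ p.2 := by
        refine sum_congr rfl fun p hp ↦ ?_
        rw [mangoldtSum, sum_mul]
        refine sum_congr rfl fun g hg ↦ ?_
        rw [← HasAntidiagonal.mem_antidiagonal.1 hp, sum_monicOfDegree_dvd χ hg, mul_assoc]

end MonicSums

/- The recurrence says `T * L' = S * L` for the generating functions `L` of `ℓ` and `S` of `s`;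
here `L = (1 - α * T) * (1 - β * T)`. -/
lemma eq_neg_pow_add_pow_of_newton {R : Type*} [CommRing R] {α β : R} {ℓ s : ℕ → R}
    (hℓ₀ : ℓ 0 = 1) (hℓ₁ : ℓ 1 = -(α + β)) (hℓ₂ : ℓ 2 = α * β) (hℓ : ∀ n, ℓ (n + 3) = 0)
    (hs : ∀ n, n * ℓ n = ∑ p ∈ antidiagonal n, s p.1 * ℓ p.2) (n : ℕ) :
    s (n + 1) = -(α ^ (n + 1) + β ^ (n + 1)) := by
  have hs₀ : s 0 = 0 := by simpa [hℓ₀] using (hs 0).symm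
  have hs₁ : s 1 = -(α + β) := by
    simpa [Nat.sum_antidiagonal_succ', hs₀, hℓ₀, hℓ₁] using (hs 1).symm
  have hs₂ : s 2 = -(α ^ 2 + β ^ 2) := by
    have h := hs 2
    simp only [Nat.sum_antidiagonal_succ', Nat.antidiagonal_zero, sum_singleton, zero_add,
      hs₀, hs₁, hℓ₀, hℓ₁, hℓ₂] at h
    linear_combination -h
  have hrec : ∀ m, s (m + 3) = (α + β) * s (m + 2) - α * β * s (m + 1) := fun m ↦ by
    have h := hs (m + 3)
    simp only [Nat.sum_antidiagonal_succ', add_assoc, Nat.reduceAdd, hℓ, hℓ₀, hℓ₁, hℓ₂, mul_zero,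
      sum_const_zero] at h
    linear_combination -h
  induction n using Nat.strong_induction_on with
  | _ n ih =>
    match n with
    | 0 => simpa using hs₁
    | 1 => exact hs₂
    | m + 2 =>
      rw [hrec, ih (m + 1) (by omega), ih m (by omega)]
      ring

/-! ### The Kloosterman weight -/

lemma nextCoeff_mul_of_domain {R : Type*} [Semiring R] [NoZeroDivisors R] (f g : R[X]) :
    (f * g).nextCoeff = f.nextCoeff * g.leadingCoeff + f.leadingCoeff * g.nextCoeff := by
  rw [← coeff_one_reverse, ← coeff_one_reverse, ← coeff_one_reverse, reverse_mul_of_domain,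
    mul_coeff_one, coeff_zero_reverse, coeff_zero_reverse, add_comm]

section KlWeight

variable {F : Type*} [Field F]

/-- The completely multiplicative function with
`f ↦ ψ (∑ x, x + a * ∑ x, x⁻¹)`, where `x` runs over the roots of `f` in a splitting field, with
multiplicity, and the value `0` at multiples of `X`. -/
noncomputable def klWeight (ψ : AddChar F ℂ) (a : F) : F[X] →* ℂ where
  toFun f := if f.coeff 0 = 0 then 0 else
    ψ (-(f.nextCoeff / f.leadingCoeff) - a * (f.coeff 1 / f.coeff 0))
  map_one' := by simp [nextCoeff, coeff_one]
  map_mul' f g := by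
    rw [mul_coeff_zero, mul_coeff_one, nextCoeff_mul_of_domain, leadingCoeff_mul]
    by_cases hf : f.coeff 0 = 0
    · simp only [hf, zero_mul, if_true]
    by_cases hg : g.coeff 0 = 0
    · simp only [hg, mul_zero, if_true]
    have hf' : f.leadingCoeff ≠ 0 := leadingCoeff_ne_zero.2 (by rintro rfl; exact hf (coeff_zero 0))
    have hg' : g.leadingCoeff ≠ 0 := leadingCoeff_ne_zero.2 (by rintro rfl; exact hg (coeff_zero 0))
    rw [if_neg hf, if_neg hg, if_neg (mul_ne_zero hf hg), ← AddChar.map_add_eq_mul]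
    congr 1
    field_simp
    ring

variable (ψ : AddChar F ℂ) (a : F)

lemma klWeight_of_coeff_zero_eq_zero {f : F[X]} (hf : f.coeff 0 = 0) : klWeight ψ a f = 0 :=
  if_pos hf

lemma klWeight_of_monic {f : F[X]} (hf : f.Monic) (hf₀ : f.coeff 0 ≠ 0) :
    klWeight ψ a f = ψ (-f.nextCoeff - a * (f.coeff 1 / f.coeff 0)) := by
  simp [klWeight, hf₀, hf.leadingCoeff]

section

variable [Finite F]

lemma klWeight_add_C_mul_X_pow {n : ℕ} {f : F[X]} (hf : f ∈ monicOfDegree F (n + 3)) (c : F) :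
    ψ c * klWeight ψ a (f + C c * X ^ (n + 2)) = klWeight ψ a f := by
  obtain ⟨hg, hdeg'⟩ := mem_monicOfDegree.1
    (add_C_mul_X_pow_mem_monicOfDegree (Nat.lt_succ_self (n + 2)) hf c)
  obtain ⟨hf, hdeg⟩ := mem_monicOfDegree.1 hf
  have hcoeff : ∀ i < n + 2, (f + C c * X ^ (n + 2)).coeff i = f.coeff i := fun i hi ↦ by
    rw [coeff_add, coeff_C_mul_X_pow, if_neg hi.ne, add_zero]
  have hnext : (f + C c * X ^ (n + 2)).nextCoeff = f.nextCoeff + c := by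
    rw [nextCoeff_of_natDegree_pos (by omega), nextCoeff_of_natDegree_pos (by omega), hdeg, hdeg',
      coeff_add, coeff_C_mul_X_pow, if_pos (by omega)]
  have hcoeff₀ := hcoeff 0 (by omega)
  by_cases hf₀ : f.coeff 0 = 0
  · rw [klWeight_of_coeff_zero_eq_zero ψ a hf₀,
      klWeight_of_coeff_zero_eq_zero ψ a (hcoeff₀.trans hf₀), mul_zero]
  · rw [klWeight_of_monic ψ a hf hf₀, klWeight_of_monic ψ a hg (hcoeff₀.trans_ne hf₀), hnext,
      hcoeff₀, hcoeff 1 (by omega), ← AddChar.map_add_eq_mul]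
    congr 1
    ring

variable {ψ} in
lemma monicSum_klWeight_add_three (hψ : ψ ≠ 1) (n : ℕ) :
    monicSum (klWeight ψ a) (n + 3) = 0 := by
  obtain ⟨c, hc⟩ := AddChar.ne_one_iff.1 hψ
  have hmem := fun (c : F) (f : F[X]) hf ↦
    add_C_mul_X_pow_mem_monicOfDegree (f := f) (Nat.lt_succ_self (n + 2)) hf c
  have hinv : monicSum (klWeight ψ a) (n + 3) = ψ c * monicSum (klWeight ψ a) (n + 3) := by
    rw [monicSum, mul_sum]
    exact sum_bij' (fun f _ ↦ f + C c * X ^ (n + 2)) (fun f _ ↦ f + C (-c) * X ^ (n + 2))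
      (hmem c) (hmem (-c)) (by simp) (by simp)
      fun f hf ↦ (klWeight_add_C_mul_X_pow ψ a hf c).symm
  exact (mul_left_eq_self₀.1 hinv.symm).resolve_left hc

end

variable [Fintype F]

lemma monicSum_klWeight_one (a : Fˣ) :
    monicSum (klWeight ψ a) 1 = Kl2 ψ a := by
  rw [monicSum, Kl2]
  refine (sum_of_injOn (fun x : Fˣ ↦ X - C (x : F)) ?_ ?_ ?_ ?_).symm
  · exact fun x _ y _ h ↦ Units.ext (C_injective (sub_right_injective h))
  · exact fun x _ ↦ mem_monicOfDegree.2 ⟨monic_X_sub_C _, natDegree_X_sub_C _⟩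
  · intro f hf hnot
    obtain ⟨hf, hdeg⟩ := mem_monicOfDegree.1 hf
    refine klWeight_of_coeff_zero_eq_zero ψ _ (not_not.1 fun hf₀ ↦ hnot ?_)
    refine ⟨Units.mk0 (-f.coeff 0) (neg_ne_zero.2 hf₀), mem_coe.2 (mem_univ _), ?_⟩
    conv_rhs => rw [hf.as_sum, hdeg]
    simp
  · intro x _
    rw [klWeight_of_monic ψ _ (monic_X_sub_C _) (by simp)]
    simp [nextCoeff_X_sub_C, div_neg]

lemma monicSum_klWeight_two_eq_sum :
    monicSum (klWeight ψ a) 2 =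
      ∑ c : F × F, if c.1 = 0 then 0 else ψ (c.2 * (-1 - a / c.1)) := by
  refine (sum_bij (fun c _ ↦ X ^ 2 + C c.2 * X + C c.1) ?_ ?_ ?_ ?_).symm
  · exact fun c _ ↦ mem_monicOfDegree.2 ⟨by monicity!, by compute_degree!⟩
  · intro c _ d _ h
    have h₀ := congrArg (coeff · 0) h
    have h₁ := congrArg (coeff · 1) h
    exact Prod.ext (by simpa using h₀) (by simpa [coeff_C] using h₁)
  · intro f hf
    obtain ⟨hf, hdeg⟩ := mem_monicOfDegree.1 hf
    refine ⟨(f.coeff 0, f.coeff 1), mem_univ _, ?_⟩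
    conv_rhs => rw [hf.as_sum, hdeg, sum_range_succ, sum_range_one, pow_zero, mul_one, pow_one]
    ring
  · rintro ⟨x, y⟩ _
    have hdeg : (X ^ 2 + C y * X + C x : F[X]).natDegree = 2 := by compute_degree!
    have hmonic : (X ^ 2 + C y * X + C x : F[X]).Monic := by monicity!
    have hnext : (X ^ 2 + C y * X + C x : F[X]).nextCoeff = y := by
      rw [nextCoeff_of_natDegree_pos (by omega), hdeg]
      simp [coeff_C]
    have hcoeff₀ : (X ^ 2 + C y * X + C x : F[X]).coeff 0 = x := by simp
    have hcoeff₁ : (X ^ 2 + C y * X + C x : F[X]).coeff 1 = y := by simp [coeff_C]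
    dsimp only
    split_ifs with hx
    · exact (klWeight_of_coeff_zero_eq_zero ψ a (hcoeff₀.trans hx)).symm
    · rw [klWeight_of_monic ψ a hmonic (hcoeff₀.trans_ne hx), hnext, hcoeff₀, hcoeff₁]
      congr 1
      ring

variable {ψ} in
lemma monicSum_klWeight_two (hψ : ψ ≠ 1) (a : Fˣ) :
    monicSum (klWeight ψ a) 2 = Fintype.card F := by
  have hinner : ∀ x : F, (∑ y : F, if x = 0 then 0 else ψ (y * (-1 - a / x))) =
      if x = -a then (Fintype.card F : ℂ) else 0 := by
    intro x
    by_cases hx : x = 0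
    · simp [hx, eq_comm (a := (0 : F))]
    · have hiff : -1 - (a : F) / x = 0 ↔ x = -a := by
        rw [sub_eq_zero, eq_div_iff hx, neg_one_mul, neg_eq_iff_eq_neg]
      simp only [if_neg hx, AddChar.sum_mulShift _ (AddChar.IsPrimitive.of_ne_one hψ), hiff]
      split_ifs <;> simp
  rw [monicSum_klWeight_two_eq_sum, Fintype.sum_prod_type, sum_congr rfl fun x _ ↦ hinner x,
    sum_ite_eq' univ, if_pos (mem_univ _)]

end KlWeight

/-! ### Sums over extension fields -/

section MinpolyInv

variable {F K : Type*} [Field F] [Field K] [Algebra F K]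

lemma nextCoeff_reverse_of_coeff_zero_ne_zero {R : Type*} [Semiring R] {f : R[X]}
    (hf : f.coeff 0 ≠ 0) : f.reverse.nextCoeff = f.coeff 1 := by
  rw [← coeff_one_reverse, reverse, reverse_natDegree,
    natTrailingDegree_eq_zero_of_constantCoeff_ne_zero hf, Nat.sub_zero, reverse, reflect_reflect]

open IntermediateField in
lemma adjoin_simple_inv (x : K) : F⟮x⁻¹⟯ = F⟮x⟯ :=
  le_antisymm (adjoin_simple_le_iff.2 (inv_mem (mem_adjoin_simple_self F x)))
    (adjoin_simple_le_iff.2 (inv_mem_iff.1 (mem_adjoin_simple_self F x⁻¹)))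

open IntermediateField in
lemma minpoly_inv {x : K} (hx : IsIntegral F x) (hx₀ : x ≠ 0) :
    minpoly F x⁻¹ = C ((minpoly F x).coeff 0)⁻¹ * (minpoly F x).reverse := by
  have hcoeff : (minpoly F x).coeff 0 ≠ 0 := minpoly.coeff_zero_ne_zero hx hx₀
  have hx' : IsIntegral F x⁻¹ := hx.inv
  have hroot : aeval x⁻¹ (minpoly F x).reverse = 0 := by
    let := invertibleOfNonzero hx₀
    rw [aeval_def, ← invOf_eq_inv, eval₂_reverse_eq_zero_iff]
    exact minpoly.aeval F x
  have hmonic : (C ((minpoly F x).coeff 0)⁻¹ * (minpoly F x).reverse).Monic := by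
    rw [Monic, leadingCoeff_mul, leadingCoeff_C, reverse_leadingCoeff,
      trailingCoeff_eq_coeff_zero hcoeff, inv_mul_cancel₀ hcoeff]
  refine (eq_of_monic_of_dvd_of_natDegree_le (minpoly.monic hx') hmonic
    (minpoly.dvd F _ (by rw [map_mul, hroot, mul_zero])) ?_).symm
  rw [← adjoin.finrank hx', adjoin_simple_inv, adjoin.finrank hx]
  exact (natDegree_C_mul_le _ _).trans (reverse_natDegree_le _)

lemma nextCoeff_minpoly_inv {x : K} (hx : IsIntegral F x) (hx₀ : x ≠ 0) :
    (minpoly F x⁻¹).nextCoeff = (minpoly F x).coeff 1 / (minpoly F x).coeff 0 := by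
  rw [minpoly_inv hx hx₀, nextCoeff_C_mul,
    nextCoeff_reverse_of_coeff_zero_ne_zero (minpoly.coeff_zero_ne_zero hx hx₀), inv_mul_eq_div]

end MinpolyInv

section Extension

open IntermediateField

variable {F K : Type*} [Field F] [Field K] [Algebra F K]

lemma klWeight_minpoly_pow_finrank [FiniteDimensional F K] (ψ : AddChar F ℂ) (a : F) {x : K}
    (hx : x ≠ 0) :
    klWeight ψ a (minpoly F x) ^ Module.finrank F⟮x⟯ K =
      ψ (Algebra.trace F K (x + algebraMap F K a * x⁻¹)) := by
  have hint : IsIntegral F x := .of_finite F x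
  rw [klWeight_of_monic ψ a (minpoly.monic hint) (minpoly.coeff_zero_ne_zero hint hx),
    ← AddChar.map_nsmul_eq_pow, ← Algebra.smul_def, map_add, map_smul (Algebra.trace F K),
    trace_eq_finrank_mul_minpoly_nextCoeff, trace_eq_finrank_mul_minpoly_nextCoeff,
    adjoin_simple_inv, nextCoeff_minpoly_inv hint hx, nsmul_eq_mul, smul_eq_mul]
  congr 1
  ring

lemma natDegree_minpoly_mul_finrank [FiniteDimensional F K] (x : K) :
    (minpoly F x).natDegree * Module.finrank F⟮x⟯ K = Module.finrank F K := by
  rw [← adjoin.finrank (.of_finite F x), Module.finrank_mul_finrank]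

lemma minpoly_pow_finrank_mem_monicOfDegree [Finite F] [FiniteDimensional F K] (x : K) :
    minpoly F x ^ Module.finrank F⟮x⟯ K ∈ monicOfDegree F (Module.finrank F K) := by
  rw [mem_monicOfDegree, natDegree_pow, mul_comm, natDegree_minpoly_mul_finrank]
  exact ⟨(minpoly.monic (.of_finite F x)).pow _, rfl⟩

variable [Fintype K]

lemma card_filter_minpoly_eq [Finite F] {P : F[X]} (hP : P.Monic) (hirr : Irreducible P)
    (hdeg : P.natDegree ∣ Module.finrank F K) : #{x : K | minpoly F x = P} = P.natDegree := by
  have hdvd : P ∣ X ^ Fintype.card K - X := by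
    rwa [← Nat.card_eq_fintype_card, Module.natCard_eq_pow_finrank (K := F),
      ← hirr.natDegree_dvd_iff_dvd_X_pow_card_pow_sub_X]
  have hsplits : Splits (P.map (algebraMap F K)) :=
    Splits.of_dvd (IsSplittingField.splits K (X ^ Fintype.card K - X : F[X]))
      (map_ne_zero (FiniteField.X_pow_card_sub_X_ne_zero _ Fintype.one_lt_card))
      (map_dvd (algebraMap F K) hdvd)
  rw [← card_rootSet_eq_natDegree (PerfectField.separable_of_irreducible hirr) hsplits,
    ← Set.toFinset_card]
  congr 1
  ext x
  rw [mem_filter_univ, Set.mem_toFinset, mem_rootSet]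
  constructor
  · rintro rfl
    exact ⟨hirr.ne_zero, minpoly.aeval F x⟩
  · exact fun h ↦ (minpoly.eq_of_irreducible_of_monic hirr h.2 hP).symm

lemma card_filter_minpoly_pow_eq [Finite F] {g : F[X]}
    (hg : g ∈ monicOfDegree F (Module.finrank F K)) :
    #{x : K | minpoly F x ^ Module.finrank F⟮x⟯ K = g} = vonMangoldt g := by
  have hirr (x : K) : Irreducible (minpoly F x) := minpoly.irreducible (.of_finite F x)
  obtain ⟨hg, hdeg⟩ := mem_monicOfDegree.1 hg
  by_cases hpow : IsPrimePow g
  · obtain ⟨P, e, hP, hPirr, he, rfl⟩ := exists_eq_pow_of_monic_of_isPrimePow hg hpow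
    rw [natDegree_pow] at hdeg
    rw [vonMangoldt_pow hP hPirr he, ← card_filter_minpoly_eq hP hPirr (Dvd.intro_left _ hdeg)]
    congr 1
    refine filter_congr fun x _ ↦ ⟨fun h ↦ ?_, ?_⟩
    · exact (eq_and_eq_of_pow_eq_pow (minpoly.monic (.of_finite F x)) (hirr x) hP hPirr
        Module.finrank_pos.ne' he h).1
    · rintro rfl
      rw [← natDegree_minpoly_mul_finrank x, mul_comm] at hdeg
      rw [Nat.eq_of_mul_eq_mul_left (hirr x).natDegree_pos hdeg]
  · rw [vonMangoldt, if_neg hpow, card_eq_zero, filter_eq_empty_iff]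
    rintro x - rfl
    exact hpow ((hirr x).prime.isPrimePow.pow Module.finrank_pos.ne')

variable (K) in
lemma mangoldtSum_finrank [Finite F] {R : Type*} [CommSemiring R] (χ : F[X] →* R) :
    mangoldtSum χ (Module.finrank F K) =
      ∑ x : K, χ (minpoly F x) ^ Module.finrank F⟮x⟯ K := by
  rw [mangoldtSum, ← sum_fiberwise_of_maps_to (s := univ)
    fun (x : K) _ ↦ minpoly_pow_finrank_mem_monicOfDegree (F := F) x]
  refine sum_congr rfl fun g hg ↦ ?_
  rw [← card_filter_minpoly_pow_eq hg, ← nsmul_eq_mul, ← sum_const]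
  refine sum_congr rfl fun x hx ↦ ?_
  rw [← (mem_filter.1 hx).2, map_pow]

variable (K) in
/-- The lift `x ↦ ψ (Tr x)` of an additive character to an extension field. -/
noncomputable def liftChar (ψ : AddChar F ℂ) : AddChar K ℂ :=
  ψ.compAddMonoidHom (Algebra.trace F K).toAddMonoidHom

lemma Kl2_liftChar (ψ : AddChar F ℂ) (a : Fˣ) :
    Kl2 (liftChar K ψ) (Units.map (algebraMap F K) a) =
      ∑ x : Kˣ, ψ (Algebra.trace F K (x + algebraMap F K a * (x : K)⁻¹)) :=
  rfl

variable (K) in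
theorem mangoldtSum_klWeight_finrank [Finite F] (ψ : AddChar F ℂ) (a : Fˣ) :
    mangoldtSum (klWeight ψ a) (Module.finrank F K) =
      Kl2 (liftChar K ψ) (Units.map (algebraMap F K) a) := by
  have hzero : klWeight ψ (a : F) (minpoly F (0 : K)) ^ Module.finrank F⟮(0 : K)⟯ K = 0 := by
    rw [minpoly.zero, klWeight_of_coeff_zero_eq_zero ψ _ coeff_X_zero,
      zero_pow Module.finrank_pos.ne']
  rw [mangoldtSum_finrank K, Kl2_liftChar]
  refine (sum_of_injOn Units.val Units.val_injective.injOn (fun _ _ ↦ mem_coe.2 (mem_univ _))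
    (fun x _ hx ↦ ?_) fun x _ ↦ (klWeight_minpoly_pow_finrank ψ _ x.ne_zero).symm).symm
  obtain rfl : x = 0 := by_contra fun hx₀ ↦ hx ⟨Units.mk0 x hx₀, mem_coe.2 (mem_univ _), rfl⟩
  exact hzero

end Extension

/-! ### The bound -/

/- Since `∑ b, ψ b = 0`, the fibre sizes `N b` may be replaced by the defects `c - N b ≥ 0`. -/
lemma norm_sum_comp_le_of_card_fiber_le {G ι : Type*} [AddCommGroup G] [Fintype G]
    {ψ : AddChar G ℂ} (hψ : ψ ≠ 1) {s : Finset ι} {f : ι → G} {c : ℕ}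
    (hc : ∀ b, #{x ∈ s | f x = b} ≤ c) :
    ‖∑ x ∈ s, ψ (f x)‖ ≤ Fintype.card G * c - #s := by
  have hfiber : ∑ x ∈ s, ψ (f x) = ∑ b, (#{x ∈ s | f x = b} : ℂ) * ψ b := by
    simp only [← sum_fiberwise s f fun x ↦ ψ (f x), ← nsmul_eq_mul]
    refine sum_congr rfl fun b _ ↦ sum_eq_card_nsmul fun x hx ↦ ?_
    rw [(mem_filter.1 hx).2]
  have hdefect : ∑ x ∈ s, ψ (f x) = -∑ b, ((c - #{x ∈ s | f x = b} : ℕ) : ℂ) * ψ b := by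
    simp only [hfiber, Nat.cast_sub (hc _), sub_mul, sum_sub_distrib, ← mul_sum,
      AddChar.sum_eq_zero_of_ne_one hψ, mul_zero, zero_sub, neg_neg]
  rw [hdefect, norm_neg]
  calc ‖∑ b, ((c - #{x ∈ s | f x = b} : ℕ) : ℂ) * ψ b‖
      ≤ ∑ b, ((c - #{x ∈ s | f x = b} : ℕ) : ℝ) :=
        norm_sum_le_of_le _ fun b _ ↦ by rw [norm_mul, AddChar.norm_apply, mul_one, norm_natCast]
    _ = Fintype.card G * c - #s := by
        simp only [Nat.cast_sub (hc _), sum_sub_distrib, sum_const, card_univ, nsmul_eq_mul]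
        rw [← Nat.cast_sum, ← card_eq_sum_card_fiberwise fun x _ ↦ mem_coe.2 (mem_univ (f x))]

lemma norm_le_of_norm_pow_add_pow_le {R : Type*} [NormedDivisionRing R] {x y : R} {r C : ℝ}
    (hr : 0 < r) (hxy : ‖x‖ * ‖y‖ ≤ r ^ 2)
    (h : ∀ n : ℕ, ‖x ^ (n + 1) + y ^ (n + 1)‖ ≤ C * r ^ (n + 1)) : ‖x‖ ≤ r := by
  by_contra! hlt
  have hy : ‖y‖ ≤ r := by
    by_contra! hlt'
    nlinarith [mul_lt_mul'' hlt hlt' hr.le hr.le]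
  obtain ⟨n, hn⟩ := pow_unbounded_of_one_lt (C + 1) ((one_lt_div hr).2 hlt)
  have hlarge : (C + 1) * r ^ (n + 1) < ‖x‖ ^ (n + 1) := by
    rw [← lt_div_iff₀ (by positivity), ← div_pow]
    exact hn.trans_le (pow_le_pow_right₀ ((one_lt_div hr).2 hlt).le n.le_succ)
  have hsmall : ‖x‖ ^ (n + 1) ≤ (C + 1) * r ^ (n + 1) :=
    calc ‖x‖ ^ (n + 1) = ‖(x ^ (n + 1) + y ^ (n + 1)) - y ^ (n + 1)‖ := by
          rw [add_sub_cancel_right, norm_pow]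
      _ ≤ ‖x ^ (n + 1) + y ^ (n + 1)‖ + ‖y‖ ^ (n + 1) := by
          rw [← norm_pow y]; exact norm_sub_le _ _
      _ ≤ C * r ^ (n + 1) + r ^ (n + 1) := by gcongr; exact h n
      _ = (C + 1) * r ^ (n + 1) := by ring
  exact hlarge.not_ge hsmall

lemma exists_add_eq_and_mul_eq {k : Type*} [Field k] [IsAlgClosed k] (b c : k) :
    ∃ α β, α + β = b ∧ α * β = c := by
  have hdeg : (X ^ 2 - C b * X + C c).natDegree = 2 := by compute_degree!
  obtain ⟨α, hα⟩ := IsAlgClosed.exists_root (X ^ 2 - C b * X + C c)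
    (natDegree_pos_iff_degree_pos.1 (by omega)).ne'
  obtain ⟨β, -, hadd, hmul⟩ := vieta_formula_quadratic (b := b) (c := c) (x := α) <| by
    simpa [sq] using hα
  exact ⟨α, β, hadd, hmul⟩

section Bound

variable {F : Type*} [Field F] [Fintype F] {ψ : AddChar F ℂ}

lemma norm_Kl2_liftChar_le {K : Type*} [Field K] [Algebra F K] [Fintype K] (hψ : ψ ≠ 1)
    (a : Fˣ) {k : ℕ} (hK : Module.finrank F K = 2 * (k + 1)) :
    ‖Kl2 (liftChar K ψ) (Units.map (algebraMap F K) a)‖ ≤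
      4 * Fintype.card F * (Fintype.card F : ℝ) ^ (k + 1) := by
  have hq : (1 : ℝ) ≤ Fintype.card F := by exact_mod_cast Fintype.card_pos (α := F)
  have hcard : (#(univ : Finset Kˣ) : ℝ) = (Fintype.card F : ℝ) ^ (2 * (k + 1)) - 1 := by
    rw [card_univ, Fintype.card_units, Module.card_eq_pow_finrank (K := F), hK,
      Nat.cast_sub (Nat.one_le_pow _ _ Fintype.card_pos), Nat.cast_pow, Nat.cast_one]
  rw [Kl2_liftChar]
  refine (norm_sum_comp_le_of_card_fiber_le hψ
    (card_trace_add_mul_inv_eq_le hK (a : F))).trans ?_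
  rw [hcard]
  push_cast
  linear_combination one_le_mul_of_one_le_of_one_le hq (one_le_pow₀ hq (n := k + 1))

lemma norm_mangoldtSum_klWeight_le (hψ : ψ ≠ 1) (a : Fˣ) (k : ℕ) :
    ‖mangoldtSum (klWeight ψ a) (2 * (k + 1))‖ ≤
      4 * Fintype.card F * (Fintype.card F : ℝ) ^ (k + 1) := by
  obtain ⟨p, hp⟩ := CharP.exists F
  have : Fact p.Prime := ⟨CharP.char_is_prime F p⟩
  let K := FiniteField.Extension F p (2 * (k + 1))
  let := Fintype.ofFinite K
  have hK : Module.finrank F K = 2 * (k + 1) := FiniteField.finrank_extension F p (2 * (k + 1))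
  rw [← hK, mangoldtSum_klWeight_finrank K]
  exact norm_Kl2_liftChar_le hψ a hK

lemma mangoldtSum_klWeight_eq (hψ : ψ ≠ 1) (a : Fˣ) {α β : ℂ} (hadd : α + β = -Kl2 ψ a)
    (hmul : α * β = Fintype.card F) (n : ℕ) :
    mangoldtSum (klWeight ψ a) (n + 1) = -(α ^ (n + 1) + β ^ (n + 1)) :=
  eq_neg_pow_add_pow_of_newton (monicSum_zero (klWeight ψ a))
    (by rw [monicSum_klWeight_one, hadd, neg_neg]) (by rw [monicSum_klWeight_two hψ, hmul])
    (monicSum_klWeight_add_three (a : F) hψ) (natCast_mul_monicSum _) n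

lemma norm_sq_le_card (hψ : ψ ≠ 1) (a : Fˣ) {α β : ℂ} (hadd : α + β = -Kl2 ψ a)
    (hmul : α * β = Fintype.card F) : ‖α‖ ^ 2 ≤ Fintype.card F := by
  rw [← norm_pow]
  refine norm_le_of_norm_pow_add_pow_le (y := β ^ 2) (C := 4 * Fintype.card F)
    (Nat.cast_pos.2 Fintype.card_pos) ?_ fun k ↦ ?_
  · rw [← norm_mul, ← mul_pow, hmul, norm_pow, norm_natCast]
  · rw [← pow_mul, ← pow_mul, ← norm_neg,
      show 2 * (k + 1) = 2 * k + 1 + 1 from rfl, ← mangoldtSum_klWeight_eq hψ a hadd hmul]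
    exact norm_mangoldtSum_klWeight_le hψ a k

end Bound

end Kloosterman

/-- **Weil's bound for Kloosterman sums.** For every finite field `F_q`, every nontrivial
additive character `ψ` and every `a ∈ F_q^×`, `|Kl_2(a, q)| ≤ 2√q`. -/
theorem weil_bound_kloosterman
    {F : Type*} [Field F] [Fintype F] (ψ : AddChar F ℂ) (hψ : ψ ≠ 1) (a : Fˣ) :
    ‖Kl2 ψ a‖ ≤ 2 * Real.sqrt (Fintype.card F) := by
  obtain ⟨α, β, hadd, hmul⟩ :=
    Kloosterman.exists_add_eq_and_mul_eq (-Kl2 ψ a) (Fintype.card F : ℂ)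
  have hα : ‖α‖ ≤ √(Fintype.card F) :=
    Real.le_sqrt_of_sq_le (Kloosterman.norm_sq_le_card hψ a hadd hmul)
  have hβ : ‖β‖ ≤ √(Fintype.card F) := Real.le_sqrt_of_sq_le <|
    Kloosterman.norm_sq_le_card hψ a ((add_comm β α).trans hadd) ((mul_comm β α).trans hmul)
  calc ‖Kl2 ψ a‖ = ‖α + β‖ := by rw [hadd, norm_neg]
    _ ≤ ‖α‖ + ‖β‖ := norm_add_le α β
    _ ≤ 2 * √(Fintype.card F) := by linarith
end
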